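/- There exist an integer q₁ ≥ 2 and an ergodic C^∞ diffeomorphism T of the torus 𝕋² preserving the Haar–Lebesgue probability measure λ such that T is measure-theoretically isomorphic to the rotation of the circle by some irrational number and the upper topological slow entropy of T with respect to the intermediate scaling family a^{int1,4}_m(t) (with base q₁) equals 1. -/

import Mathlib

open MeasureTheory Filter Set
open scoped Topology ENNReal NNReal

noncomputable section

/-- The Bowen metric `d_n^T(x,y) = max_{0 ≤ i ≤ n-1} d(T^i x, T^i y)`. -/
def bowenDist {X : Type*} [PseudoMetricSpace X] (T : X → X) (n : ℕ) (x y : X) : ℝ :=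
  (((Finset.range n).sup fun i => nndist (T^[i] x) (T^[i] y)) : ℝ≥0)

/-- `N_{d_n^T}(ε)`: the minimal number of `(ε,n)`-Bowen balls of `T` needed to cover the
whole space. -/
def bowenCoverNum {X : Type*} [PseudoMetricSpace X] (T : X → X) (n : ℕ) (ε : ℝ) : ℕ :=
  sInf {N : ℕ | ∃ F : Finset X, F.card = N ∧ ∀ y : X, ∃ x ∈ F, bowenDist T n x y < ε}

/-- `N(ε)`: the supremum (`0` if the set is empty, by the `Real.sSup` convention) of all
`t > 0` such that `limsup_n N_{d_n^T}(ε) / a_n(t) > 0`. -/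
def topSlowEntFun {X : Type*} [PseudoMetricSpace X] (T : X → X) (a : ℕ → ℝ → ℝ) (ε : ℝ) : ℝ :=
  sSup {t : ℝ | 0 < t ∧
    0 < Filter.atTop.limsup fun n => (bowenCoverNum T n ε : ℝ≥0∞) / ENNReal.ofReal (a n t)}

/-- The upper topological slow entropy of `T` with respect to the scaling family `a`
equals `E`, i.e. `N(ε) → E` as `ε → 0⁺`. -/
def HasUpperTopSlowEntropy {X : Type*} [PseudoMetricSpace X] (T : X → X)
    (a : ℕ → ℝ → ℝ) (E : ℝ) : Prop :=
  Filter.Tendsto (topSlowEntFun T a) (𝓝[>] (0 : ℝ)) (𝓝 E)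

/-- The circle `𝕋¹ = ℝ/ℤ` with its quotient metric and Haar–Lebesgue probability
measure `volume`. -/
abbrev Torus1 : Type := AddCircle (1 : ℝ)

/-- The 2-torus `𝕋² = ℝ²/ℤ²`, with its quotient (flat) metric, its Borel σ-algebra and
its Haar–Lebesgue probability measure `volume`. -/
abbrev Torus2 : Type := AddCircle (1 : ℝ) × AddCircle (1 : ℝ)

/-- Canonical projection `ℝ² → 𝕋²`. -/
def torusProj : ℝ × ℝ → Torus2 := fun p => ((p.1 : Torus1), (p.2 : Torus1))

/-- `F : ℝ² → ℝ²` is a lift of `T : 𝕋² → 𝕋²`. -/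
def IsLiftOf (F : ℝ × ℝ → ℝ × ℝ) (T : Torus2 → Torus2) : Prop :=
  ∀ p, torusProj (F p) = T (torusProj p)

/-- `T` is a `C^k` diffeomorphism of the torus: it is a bijection and both `T` and `T⁻¹`
admit `C^k` lifts to the universal cover `ℝ²`. -/
def IsCkTorusDiffeo (k : ℕ∞) (T : Torus2 → Torus2) : Prop :=
  Function.Bijective T ∧
  (∃ F : ℝ × ℝ → ℝ × ℝ, ContDiff ℝ k F ∧ IsLiftOf F T) ∧
  (∃ G : ℝ × ℝ → ℝ × ℝ, ContDiff ℝ k G ∧ IsLiftOf G (Function.invFun T))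

/-- `T` is weakly mixing w.r.t. the measure `μ`: `T × T` is ergodic for `μ × μ`. -/
def WeaklyMixing {X : Type*} [MeasurableSpace X] (T : X → X) (μ : Measure X) : Prop :=
  Ergodic (fun p : X × X => (T p.1, T p.2)) (μ.prod μ)

/-- `T` is uniquely ergodic with the Haar–Lebesgue measure `volume` as its unique
invariant Borel probability measure. -/
def UniquelyErgodicWithVolume (T : Torus2 → Torus2) : Prop :=
  MeasurePreserving T volume volume ∧
  ∀ μ : Measure Torus2, IsProbabilityMeasure μ → MeasurePreserving T μ μ → μ = volume

/-- `T` (preserving the Haar measure `volume` on `𝕋²`) is measure-theoretically isomorphic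
to the rotation of the circle `𝕋¹ = ℝ/ℤ` by some irrational number `α`. -/
def IsoToIrrationalRotation (T : Torus2 → Torus2) : Prop :=
  ∃ α : ℝ, Irrational α ∧
    ∃ (A : Set Torus2) (B : Set Torus1) (ψ : Torus2 → Torus1) (φ : Torus1 → Torus2),
      MeasurableSet A ∧ MeasurableSet B ∧
      volume Aᶜ = 0 ∧ volume Bᶜ = 0 ∧
      Set.MapsTo T A A ∧ Set.MapsTo (fun y : Torus1 => y + (α : Torus1)) B B ∧
      Measurable ψ ∧ Measurable φ ∧
      Set.MapsTo ψ A B ∧ Set.MapsTo φ B A ∧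
      (∀ x ∈ A, φ (ψ x) = x) ∧ (∀ y ∈ B, ψ (φ y) = y) ∧
      Measure.map ψ volume = volume ∧
      (∀ x ∈ A, ψ (T x) = ψ x + (α : Torus1))

/-- A finite measurable partition of `X`. -/
structure FinMeasPartition (X : Type*) [MeasurableSpace X] where
  card : ℕ
  piece : Fin card → Set X
  measurable : ∀ i, MeasurableSet (piece i)
  disjoint : Pairwise fun i j => Disjoint (piece i) (piece j)
  cover : (⋃ i, piece i) = Set.univ

open Classical in
/-- The normalized Hamming distance between the length-`n` `P`-codings of the `T`-orbits
of `x` and `y` (the codings differ at time `k` iff `T^k x` and `T^k y` lie in different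
pieces of `P`). -/
def codeHammingDist {X : Type*} [MeasurableSpace X] (T : X → X) (P : FinMeasPartition X)
    (n : ℕ) (x y : X) : ℝ :=
  (((Finset.range n).filter fun k =>
      ¬ ∃ i, T^[k] x ∈ P.piece i ∧ T^[k] y ∈ P.piece i).card : ℝ) / n

/-- `S^H_P(T,n,ε)`: the minimal number of `(ε,n)`-Hamming balls whose union has
`μ`-measure greater than `1 - ε`. -/
def hammingCoverNum {X : Type*} [MeasurableSpace X] (μ : Measure X) (T : X → X)
    (P : FinMeasPartition X) (n : ℕ) (ε : ℝ) : ℕ :=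
  sInf {N : ℕ | ∃ F : Finset X, F.card = N ∧
    ENNReal.ofReal (1 - ε) < μ (⋃ x ∈ F, {y | codeHammingDist T P n x y < ε})}

/-- For a fixed partition `P` and `ε > 0`: the supremum (with the `Real.sSup` convention,
`0` if the set is empty) of all `t > 0` with `limsup_n S^H_P(T,n,ε)/a_n(t) > 0`. -/
def measSlowEntFun {X : Type*} [MeasurableSpace X] (μ : Measure X) (T : X → X)
    (a : ℕ → ℝ → ℝ) (P : FinMeasPartition X) (ε : ℝ) : ℝ :=
  sSup {t : ℝ | 0 < t ∧
    0 < Filter.atTop.limsup fun n =>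
      (hammingCoverNum μ T P n ε : ℝ≥0∞) / ENNReal.ofReal (a n t)}

/-- The upper measure-theoretic slow entropy of `(T,μ)` w.r.t. the scaling family `a`
equals `E`: for every finite measurable partition the limit as `ε → 0⁺` exists, and the
least upper bound over all partitions of these limits is `E`. -/
def HasUpperMeasSlowEntropy {X : Type*} [MeasurableSpace X] (μ : Measure X) (T : X → X)
    (a : ℕ → ℝ → ℝ) (E : ℝ) : Prop :=
  (∀ P : FinMeasPartition X, ∃ e : ℝ,
      Filter.Tendsto (measSlowEntFun μ T a P) (𝓝[>] (0 : ℝ)) (𝓝 e)) ∧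
  IsLUB {e : ℝ | ∃ P : FinMeasPartition X,
      Filter.Tendsto (measSlowEntFun μ T a P) (𝓝[>] (0 : ℝ)) (𝓝 e)} E

/-- `Γ_r(x) = (Γ(x^{1/r} + 1))^r`, where `Γ` is the Euler Gamma function. -/
def GammaR (r : ℕ) (x : ℝ) : ℝ := (Real.Gamma (x ^ ((r : ℝ)⁻¹) + 1)) ^ r

/-- The inverse of `Γ_r` on `[1,∞)` (where `Γ_r` is strictly increasing with `Γ_r 1 = 1`). -/
def GammaRInv (r : ℕ) (y : ℝ) : ℝ := sSup {x : ℝ | 1 ≤ x ∧ GammaR r x ≤ y}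

/-- The intermediate scaling family `a^{int1,r}_m(t) = m^(t / Γ_r⁻¹(ln m / ln q₁))`. -/
def intScale1 (r q₁ : ℕ) (m : ℕ) (t : ℝ) : ℝ :=
  (m : ℝ) ^ (t / GammaRInv r (Real.log m / Real.log q₁))

/-- The intermediate scaling family
`a^{int2,r}_m(t) = m^(t / (Γ_r⁻¹(ln m / ln q₁))^((r-2)/r))`. -/
def intScale2 (r q₁ : ℕ) (m : ℕ) (t : ℝ) : ℝ :=
  (m : ℝ) ^ (t / GammaRInv r (Real.log m / Real.log q₁) ^ (((r : ℝ) - 2) / (r : ℝ)))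

/-- The logarithmic scaling family `a^{ln}_m(t) = (ln m)^t`. -/
def logScale (m : ℕ) (t : ℝ) : ℝ := Real.log m ^ t

/-- The polynomial scaling family `a^{pol}_m(t) = m^t`. -/
def polScale (m : ℕ) (t : ℝ) : ℝ := (m : ℝ) ^ t

end

/-!
The diffeomorphism is a limit, in the style of Anosov and Katok, of maps `Hₙ ∘ R(βₙ) ∘ Hₙ⁻¹`,
where `R(β)` is the translation `(x, y) ↦ (x + β, y)` and `βₙ` is rational. The next conjugacy is
`Hₙ₊₁ = Hₙ ∘ G ∘ S`, with `G` and the shear `S(x, y) = (x, y + A cos (2πqx))` both commuting with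
`R(βₙ)`, and `βₙ₊₁ = βₙ + 1/m` for a huge `m`. Since `S` commutes with `R(βₙ)`, its effect on the
map is of size `A/m`, which is small in every `C^k` norm as long as the amplitude `A` grows more
slowly than every power of `m`.

With `A = ⌊exp (L m)⌋`, orbits of length `m` of the new map separate about `A` points; conversely
about `A` points suffice to follow all its orbits forever, and up to times of order `m / A` the
new map shadows the old one. As `log (m / A)` is asymptotic to `log m` and `L` varies slowly, no
orbit length in between sees more than `exp ((1 + o(1)) L)` points, so the slow entropy with
respect to `exp (t L(m))` is exactly `1`.

Since `S` preserves the first coordinate and `G` almost does, the first coordinates of `Hₙ⁻¹`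
converge to a factor map onto the circle rotation by `lim βₙ`. The map `Hₙ ∘ G` squeezes most of
the torus near a curve that is a graph over the angle, which makes the factor map injective almost
everywhere.
-/

noncomputable section

open scoped ContDiff

/-! ### The intermediate scaling family -/

lemma tendsto_gamma_atTop : Tendsto Real.Gamma atTop atTop := by
  refine tendsto_atTop_atTop.2 fun b => ?_
  obtain ⟨k, hk⟩ := exists_nat_ge b
  refine ⟨((k + 1 : ℕ) : ℝ) + 1, fun x hx => ?_⟩
  have h_two : (2 : ℝ) ≤ ((k + 1 : ℕ) : ℝ) + 1 := by push_cast; linarith [k.cast_nonneg (α := ℝ)]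
  calc b ≤ k := hk
    _ ≤ ((k + 1).factorial : ℝ) := mod_cast k.le_succ.trans (k + 1).self_le_factorial
    _ = Real.Gamma (((k + 1 : ℕ) : ℝ) + 1) := (Real.Gamma_nat_eq_factorial _).symm
    _ ≤ Real.Gamma x := Real.Gamma_strictMonoOn_Ici.monotoneOn h_two (h_two.trans hx) hx

section GammaR

variable {r : ℕ} {x y : ℝ}

lemma gammaR_one (r : ℕ) : GammaR r 1 = 1 := by simp [GammaR, one_add_one_eq_two]

lemma strictMonoOn_gammaR (hr : r ≠ 0) : StrictMonoOn (GammaR r) (Ici 1) := by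
  intro x hx y _ hxy
  have h_root : x ^ (r : ℝ)⁻¹ < y ^ (r : ℝ)⁻¹ :=
    Real.rpow_lt_rpow (zero_le_one.trans hx) hxy (by positivity)
  have h_one : 1 ≤ x ^ (r : ℝ)⁻¹ := Real.one_le_rpow hx (by positivity)
  refine pow_lt_pow_left₀ (Real.Gamma_strictMonoOn_Ici ?_ ?_ ?_)
    (Real.Gamma_pos_of_pos (by linarith)).le hr
  all_goals first | rw [mem_Ici]; linarith | linarith

lemma continuousOn_gammaR (r : ℕ) : ContinuousOn (GammaR r) (Ici 0) := by
  have h_gamma : ContinuousOn Real.Gamma (Ioi 0) := fun z hz =>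
    (Real.differentiableAt_Gamma fun k =>
      ((neg_nonpos.2 k.cast_nonneg).trans_lt hz).ne').continuousAt.continuousWithinAt
  have h_root : Continuous fun x : ℝ => x ^ (r : ℝ)⁻¹ + 1 :=
    (Real.continuous_rpow_const (inv_nonneg.2 r.cast_nonneg)).add_const 1
  exact (h_gamma.comp h_root.continuousOn fun x hx =>
    add_pos_of_nonneg_of_pos (Real.rpow_nonneg hx _) one_pos).pow r

lemma tendsto_gammaR_atTop (hr : r ≠ 0) : Tendsto (GammaR r) atTop atTop :=
  (tendsto_pow_atTop hr).comp <| tendsto_gamma_atTop.comp <|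
    tendsto_atTop_add_const_right _ _ (tendsto_rpow_atTop (by positivity))

lemma gammaRInv_gammaR (hr : r ≠ 0) (hx : 1 ≤ x) : GammaRInv r (GammaR r x) = x :=
  IsGreatest.csSup_eq ⟨⟨hx, le_rfl⟩, fun _ hz =>
    ((strictMonoOn_gammaR hr).le_iff_le hz.1 hx).1 hz.2⟩

lemma exists_gammaR_eq (hr : r ≠ 0) (hy : 1 ≤ y) : ∃ x, 1 ≤ x ∧ GammaR r x = y :=
  intermediate_value_Ici ((continuousOn_gammaR r).mono (Ici_subset_Ici.2 zero_le_one))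
    (tendsto_gammaR_atTop hr) (by rwa [gammaR_one])

lemma one_le_gammaRInv (hr : r ≠ 0) (hy : 1 ≤ y) : 1 ≤ GammaRInv r y := by
  obtain ⟨x, hx, rfl⟩ := exists_gammaR_eq hr hy
  rwa [gammaRInv_gammaR hr hx]

lemma gammaR_gammaRInv (hr : r ≠ 0) (hy : 1 ≤ y) : GammaR r (GammaRInv r y) = y := by
  obtain ⟨x, hx, rfl⟩ := exists_gammaR_eq hr hy
  rw [gammaRInv_gammaR hr hx]

lemma monotoneOn_gammaRInv (hr : r ≠ 0) : MonotoneOn (GammaRInv r) (Ici 1) := by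
  intro y hy z hz hyz
  rwa [← (strictMonoOn_gammaR hr).le_iff_le (one_le_gammaRInv hr hy) (one_le_gammaRInv hr hz),
    gammaR_gammaRInv hr hy, gammaR_gammaRInv hr hz]

lemma tendsto_gammaRInv_atTop (hr : r ≠ 0) : Tendsto (GammaRInv r) atTop atTop := by
  refine tendsto_atTop_atTop.2 fun b => ⟨GammaR r (max b 1), fun y hy => ?_⟩
  have h_one : 1 ≤ GammaR r (max b 1) := by
    refine (gammaR_one r).symm.trans_le ?_
    exact (strictMonoOn_gammaR hr).monotoneOn self_mem_Ici (le_max_right b 1) (le_max_right b 1)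
  calc b ≤ max b 1 := le_max_left _ _
    _ = GammaRInv r (GammaR r (max b 1)) := (gammaRInv_gammaR hr (le_max_right _ _)).symm
    _ ≤ GammaRInv r y := monotoneOn_gammaRInv hr h_one (h_one.trans hy) hy

/- With `s = (Γ_r⁻¹ y)^{1/r}`, the functional equation gives `y = Γ(s + 1)^r = s^r Γ(s)^r`. -/
lemma div_gammaRInv (hr : r ≠ 0) (hy : 1 ≤ y) :
    y / GammaRInv r y = Real.Gamma (GammaRInv r y ^ (r : ℝ)⁻¹) ^ r := by
  have h_one := one_le_gammaRInv hr hy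
  have h_pos : 0 < GammaRInv r y := one_pos.trans_le h_one
  rw [div_eq_iff h_pos.ne']
  calc y = GammaR r (GammaRInv r y) := (gammaR_gammaRInv hr hy).symm
    _ = (GammaRInv r y ^ (r : ℝ)⁻¹ * Real.Gamma (GammaRInv r y ^ (r : ℝ)⁻¹)) ^ r := by
      rw [GammaR, Real.Gamma_add_one (by positivity)]
    _ = _ := by rw [mul_pow, Real.rpow_inv_natCast_pow h_pos.le hr, mul_comm]

end GammaR

/-- Growth functions `L` for which the scaling family `exp (t L(m))` can be realised: unbounded,
but of smaller order than `log m`, with eventual monotonicity. -/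
structure IsSlowGrowth (L : ℕ → ℝ) : Prop where
  tendsto_atTop : Tendsto L atTop atTop
  tendsto_div_log : Tendsto (fun m => L m / Real.log m) atTop (𝓝 0)
  monotone : ∃ m₀, MonotoneOn L (Ici m₀)
  antitone_div_log : ∃ m₀, AntitoneOn (fun m => L m / Real.log m) (Ici m₀)

/-- The exponent of the intermediate scaling family:
`a^{int1,r}_m(t) = exp (t · intGrowth r q m)`. -/
def intGrowth (r q m : ℕ) : ℝ := Real.log m / GammaRInv r (Real.log m / Real.log q)

section IntGrowth

variable {r q m : ℕ}

lemma intScale1_eq_exp (hm : m ≠ 0) (t : ℝ) :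
    intScale1 r q m t = Real.exp (t * intGrowth r q m) := by
  rw [intScale1, intGrowth, Real.rpow_def_of_pos (by positivity)]
  ring_nf

lemma tendsto_log_div_log_atTop (hq : 2 ≤ q) :
    Tendsto (fun m : ℕ => Real.log m / Real.log q) atTop atTop :=
  (Real.tendsto_log_atTop.comp tendsto_natCast_atTop_atTop).atTop_div_const
    (Real.log_pos (by exact_mod_cast hq))

lemma monotoneOn_gammaRInv_log (hr : r ≠ 0) (hq : 2 ≤ q) :
    MonotoneOn (fun m : ℕ => GammaRInv r (Real.log m / Real.log q)) (Ici q) := by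
  have h_pos : 0 < Real.log q := Real.log_pos (by exact_mod_cast hq)
  have h_mono {m n : ℕ} (hm : q ≤ m) (hmn : m ≤ n) :
      Real.log m / Real.log q ≤ Real.log n / Real.log q := by
    gcongr
    exact_mod_cast (two_pos.trans_le hq).trans_le hm
  have h_one {m : ℕ} (hm : q ≤ m) : 1 ≤ Real.log m / Real.log q :=
    (div_self h_pos.ne').symm.trans_le (h_mono le_rfl hm)
  exact fun m hm n hn hmn =>
    monotoneOn_gammaRInv hr (h_one hm) (h_one hn) (h_mono hm hmn)

lemma eventually_intGrowth_eq (hr : r ≠ 0) (hq : 2 ≤ q) :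
    intGrowth r q =ᶠ[atTop] fun m => Real.log q *
      Real.Gamma (GammaRInv r (Real.log m / Real.log q) ^ (r : ℝ)⁻¹) ^ r := by
  have h_pos : 0 < Real.log q := Real.log_pos (by exact_mod_cast hq)
  filter_upwards [(tendsto_log_div_log_atTop hq).eventually_ge_atTop 1] with m hm
  rw [← div_gammaRInv hr hm, intGrowth, ← mul_div_assoc, mul_div_cancel₀ _ h_pos.ne']

lemma tendsto_gammaRInv_log_atTop (hr : r ≠ 0) (hq : 2 ≤ q) :
    Tendsto (fun m : ℕ => GammaRInv r (Real.log m / Real.log q)) atTop atTop :=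
  (tendsto_gammaRInv_atTop hr).comp (tendsto_log_div_log_atTop hq)

lemma tendsto_gammaRInv_log_rpow_atTop (hr : r ≠ 0) (hq : 2 ≤ q) :
    Tendsto (fun m : ℕ => GammaRInv r (Real.log m / Real.log q) ^ (r : ℝ)⁻¹) atTop atTop :=
  (tendsto_rpow_atTop (by positivity)).comp (tendsto_gammaRInv_log_atTop hr hq)

lemma tendsto_intGrowth_atTop (hr : r ≠ 0) (hq : 2 ≤ q) : Tendsto (intGrowth r q) atTop atTop := by
  refine Tendsto.congr' (eventually_intGrowth_eq hr hq).symm ?_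
  exact ((tendsto_pow_atTop hr).comp (tendsto_gamma_atTop.comp
    (tendsto_gammaRInv_log_rpow_atTop hr hq))).const_mul_atTop
      (Real.log_pos (by exact_mod_cast hq))

lemma exists_monotoneOn_intGrowth (hr : r ≠ 0) (hq : 2 ≤ q) :
    ∃ m₀, MonotoneOn (intGrowth r q) (Ici m₀) := by
  obtain ⟨m₀, h₀⟩ := eventually_atTop.1 ((eventually_intGrowth_eq hr hq).and <|
    ((tendsto_gammaRInv_log_rpow_atTop hr hq).eventually_ge_atTop 2).and <|
    ((tendsto_gammaRInv_log_atTop hr hq).eventually_ge_atTop 0).and (eventually_ge_atTop q))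
  refine ⟨m₀, fun m hm n hn hmn => ?_⟩
  obtain ⟨hm_eq, hm_two, hm_nonneg, hqm⟩ := h₀ m hm
  obtain ⟨hn_eq, hn_two, -, hqn⟩ := h₀ n hn
  have h_root := Real.rpow_le_rpow hm_nonneg (monotoneOn_gammaRInv_log hr hq hqm hqn hmn)
    (inv_nonneg.2 r.cast_nonneg)
  have h_gamma := Real.Gamma_strictMonoOn_Ici.monotoneOn hm_two hn_two h_root
  rw [hm_eq, hn_eq]
  exact mul_le_mul_of_nonneg_left
    (pow_le_pow_left₀ (Real.Gamma_nonneg_of_nonneg (by linarith)) h_gamma r)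
    (Real.log_natCast_nonneg q)

lemma intGrowth_div_log (hm : 2 ≤ m) :
    intGrowth r q m / Real.log m = (GammaRInv r (Real.log m / Real.log q))⁻¹ := by
  rw [intGrowth, div_right_comm, div_self (Real.log_pos (by exact_mod_cast hm)).ne', one_div]

lemma isSlowGrowth_intGrowth (hr : r ≠ 0) (hq : 2 ≤ q) : IsSlowGrowth (intGrowth r q) where
  tendsto_atTop := tendsto_intGrowth_atTop hr hq
  tendsto_div_log := by
    refine (tendsto_gammaRInv_log_atTop hr hq).inv_tendsto_atTop.congr' ?_
    filter_upwards [eventually_ge_atTop 2] with m hm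
    exact (intGrowth_div_log hm).symm
  monotone := exists_monotoneOn_intGrowth hr hq
  antitone_div_log := by
    obtain ⟨m₁, h₁⟩ := eventually_atTop.1
      ((tendsto_gammaRInv_log_atTop hr hq).eventually_gt_atTop 0)
    refine ⟨max q m₁, fun m hm n hn hmn => ?_⟩
    obtain ⟨hqm, hm₁⟩ := max_le_iff.1 (mem_Ici.1 hm)
    obtain ⟨hqn, -⟩ := max_le_iff.1 (mem_Ici.1 hn)
    simp only [intGrowth_div_log (hq.trans hqm), intGrowth_div_log (hq.trans hqn)]
    exact inv_anti₀ (h₁ m hm₁) (monotoneOn_gammaRInv_log hr hq hqm hqn hmn)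

end IntGrowth

/-! ### Amplitudes and time scales of the shears -/

/-- The amplitude of the shear used at a stage of denominator `m`: orbits of length `m` see
about `exp L(m)` distinguishable points. -/
def shearAmp (L : ℕ → ℝ) (m : ℕ) : ℕ := ⌊Real.exp (L m)⌋₊

/-- The time up to which a shear of amplitude `shearAmp L m` cannot amplify the change `1 / m` of
rotation number beyond the threshold `κ`. -/
def shadowTime (L : ℕ → ℝ) (κ : ℝ) (m : ℕ) : ℕ := ⌊κ * (m / shearAmp L m)⌋₊

lemma shearAmp_le_exp (L : ℕ → ℝ) (m : ℕ) : (shearAmp L m : ℝ) ≤ Real.exp (L m) :=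
  Nat.floor_le (Real.exp_pos _).le

lemma tendsto_log_natCast_atTop : Tendsto (fun m : ℕ => Real.log m) atTop atTop :=
  Real.tendsto_log_atTop.comp tendsto_natCast_atTop_atTop

namespace IsSlowGrowth

variable {L : ℕ → ℝ} {κ : ℝ}

lemma tendsto_shearAmp_atTop (hL : IsSlowGrowth L) : Tendsto (shearAmp L) atTop atTop :=
  tendsto_nat_floor_atTop.comp (Real.tendsto_exp_atTop.comp hL.tendsto_atTop)

lemma tendsto_shearAmp_div (hL : IsSlowGrowth L) :
    Tendsto (fun m : ℕ => (shearAmp L m : ℝ) / m) atTop (𝓝 0) := by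
  have h_exponent : Tendsto (fun m : ℕ => Real.log m * (L m / Real.log m - 1)) atTop atBot :=
    tendsto_log_natCast_atTop.atTop_mul_neg neg_one_lt_zero
      (by simpa using hL.tendsto_div_log.sub_const 1)
  refine squeeze_zero' (.of_forall fun m => by positivity) ?_
    (Real.tendsto_exp_atBot.comp h_exponent)
  filter_upwards [tendsto_log_natCast_atTop.eventually_gt_atTop 0, eventually_gt_atTop 0]
    with m h_log hm
  calc (shearAmp L m : ℝ) / m ≤ Real.exp (L m) / m := by gcongr; exact shearAmp_le_exp L m
    _ = Real.exp (Real.log m * (L m / Real.log m - 1)) := by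
      rw [mul_sub, mul_div_cancel₀ _ h_log.ne', mul_one, Real.exp_sub,
        Real.exp_log (by exact_mod_cast hm)]

lemma tendsto_div_shearAmp_atTop (hL : IsSlowGrowth L) :
    Tendsto (fun m : ℕ => (m : ℝ) / shearAmp L m) atTop atTop := by
  have h_pos : ∀ᶠ m : ℕ in atTop, (shearAmp L m : ℝ) / m ∈ Ioi (0 : ℝ) := by
    filter_upwards [hL.tendsto_shearAmp_atTop.eventually_gt_atTop 0, eventually_gt_atTop 0]
      with m hS hm
    exact div_pos (Nat.cast_pos (α := ℝ).2 hS) (Nat.cast_pos.2 hm)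
  exact (tendsto_nhdsWithin_iff.2 ⟨hL.tendsto_shearAmp_div, h_pos⟩).inv_tendsto_nhdsGT_zero.congr
    fun m => inv_div _ _

lemma tendsto_shadowTime_atTop (hL : IsSlowGrowth L) (hκ : 0 < κ) :
    Tendsto (shadowTime L κ) atTop atTop :=
  tendsto_nat_floor_atTop.comp (hL.tendsto_div_shearAmp_atTop.const_mul_atTop hκ)

lemma eventually_shadowTime_le (hL : IsSlowGrowth L) (κ : ℝ) :
    ∀ᶠ m in atTop, shadowTime L κ m ≤ m := by
  obtain ⟨k, hk⟩ := exists_nat_ge κ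
  filter_upwards [hL.tendsto_shearAmp_atTop.eventually_ge_atTop (k + 1)] with m hS
  have hS' : (k : ℝ) + 1 ≤ shearAmp L m := by exact_mod_cast hS
  refine Nat.floor_le_of_le ?_
  rw [← mul_div_assoc, mul_comm, mul_div_assoc]
  exact mul_le_of_le_one_right m.cast_nonneg
    (div_le_one_of_le₀ (by linarith) (shearAmp L m).cast_nonneg)

lemma eventually_le_log_shadowTime (hL : IsSlowGrowth L) (hκ : 0 < κ) {ε : ℝ} (hε : 0 < ε) :
    ∀ᶠ m : ℕ in atTop, (1 - ε) * Real.log m ≤ Real.log (shadowTime L κ m) := by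
  filter_upwards [(hL.tendsto_div_shearAmp_atTop.const_mul_atTop hκ).eventually_ge_atTop 2,
    hL.tendsto_div_log.eventually_le_const (half_pos hε),
    (tendsto_log_natCast_atTop.const_mul_atTop (half_pos hε)).eventually_ge_atTop
      (-Real.log (κ / 2)),
    tendsto_log_natCast_atTop.eventually_gt_atTop 0, eventually_gt_atTop 0,
    hL.tendsto_shearAmp_atTop.eventually_gt_atTop 0] with m h_two h_slow h_const h_log hm hS
  have hm' : (0 : ℝ) < m := by exact_mod_cast hm
  have hS' : (0 : ℝ) < shearAmp L m := by exact_mod_cast hS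
  have h_floor : κ / 2 * (m / Real.exp (L m)) ≤ shadowTime L κ m := by
    have h_lt := Nat.lt_floor_add_one (κ * (m / shearAmp L m))
    have h_exp : κ * (m / Real.exp (L m)) ≤ κ * (m / shearAmp L m) := by
      gcongr; exact shearAmp_le_exp L m
    rw [← shadowTime] at h_lt
    linarith
  calc (1 - ε) * Real.log m ≤ Real.log (κ / 2) + (Real.log m - L m) := by
        rw [div_le_iff₀ h_log] at h_slow
        linarith
    _ = Real.log (κ / 2 * (m / Real.exp (L m))) := by
      rw [Real.log_mul (by positivity) (by positivity), Real.log_div hm'.ne' (by positivity),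
        Real.log_exp]
    _ ≤ Real.log (shadowTime L κ m) := Real.log_le_log (by positivity) h_floor

lemma eventually_forall_shadowTime_le (hL : IsSlowGrowth L) (hκ : 0 < κ) {ε : ℝ} (hε : 0 < ε) :
    ∀ᶠ m in atTop, ∀ k, shadowTime L κ m ≤ k → (1 - ε) * L m ≤ L k := by
  obtain ⟨m₁, h_mono⟩ := hL.monotone
  obtain ⟨m₂, h_anti⟩ := hL.antitone_div_log
  filter_upwards [hL.eventually_le_log_shadowTime hκ hε, hL.eventually_shadowTime_le κ,
    (hL.tendsto_shadowTime_atTop hκ).eventually_ge_atTop (max m₁ (max m₂ 2)),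
    hL.tendsto_atTop.eventually_ge_atTop 0, tendsto_log_natCast_atTop.eventually_gt_atTop 0]
    with m h_log hMm hM hLm h_log_pos k hk
  simp only [max_le_iff] at hM
  obtain ⟨hM₁, hM₂, hM_two⟩ := hM
  have hM_log : 0 < Real.log (shadowTime L κ m) := Real.log_pos (by exact_mod_cast hM_two)
  calc (1 - ε) * L m = L m / Real.log m * ((1 - ε) * Real.log m) := by field_simp
    _ ≤ L m / Real.log m * Real.log (shadowTime L κ m) := by gcongr
    _ ≤ L (shadowTime L κ m) / Real.log (shadowTime L κ m) * Real.log (shadowTime L κ m) := by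
      exact mul_le_mul_of_nonneg_right (h_anti hM₂ (hM₂.trans hMm) hMm) hM_log.le
    _ = L (shadowTime L κ m) := div_mul_cancel₀ _ hM_log.ne'
    _ ≤ L k := h_mono hM₁ (hM₁.trans hk) hk

lemma eventually_mul_shearAmp_le (hL : IsSlowGrowth L) (hκ : 0 < κ) (K : ℝ) {ε : ℝ}
    (hε : 0 < ε) : ∀ᶠ m in atTop, ∀ k, shadowTime L κ m ≤ k →
      K * shearAmp L m ≤ Real.exp ((1 + ε) * L k) := by
  have hε' : 0 < ε / 2 / (1 + ε) := by positivity
  filter_upwards [hL.eventually_forall_shadowTime_le hκ hε',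
    (Real.tendsto_exp_atTop.comp
      (hL.tendsto_atTop.const_mul_atTop (half_pos hε))).eventually_ge_atTop K] with m h_le hK k hk
  calc K * shearAmp L m ≤ Real.exp (ε / 2 * L m) * Real.exp (L m) := by
        gcongr
        · exact hK
        · exact shearAmp_le_exp L m
    _ = Real.exp ((1 + ε) * ((1 - ε / 2 / (1 + ε)) * L m)) := by
      rw [← Real.exp_add]
      congr 1
      field_simp
      ring
    _ ≤ Real.exp ((1 + ε) * L k) := by gcongr; exact h_le k hk

lemma eventually_exp_le_floor (hL : IsSlowGrowth L) {c ε : ℝ} (hc : 0 < c) (hε : 0 < ε) :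
    ∀ᶠ m in atTop, Real.exp ((1 - ε) * L m) ≤ ⌊c * shearAmp L m⌋₊ := by
  have h_small : Tendsto (fun m => Real.exp (-(ε * L m))) atTop (𝓝 0) :=
    Real.tendsto_exp_neg_atTop_nhds_zero.comp (hL.tendsto_atTop.const_mul_atTop hε)
  filter_upwards [h_small.eventually_le_const (half_pos hc),
    ((Real.tendsto_exp_atTop.comp hL.tendsto_atTop).const_mul_atTop
      (half_pos hc)).eventually_ge_atTop (c + 1)] with m h_half h_large
  have h_amp : Real.exp (L m) - 1 ≤ shearAmp L m := (Nat.sub_one_lt_floor _).le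
  calc Real.exp ((1 - ε) * L m) = Real.exp (-(ε * L m)) * Real.exp (L m) := by
        rw [← Real.exp_add]; ring_nf
    _ ≤ c / 2 * Real.exp (L m) := by gcongr
    _ ≤ c * (Real.exp (L m) - 1) - 1 := by
      simp only [Function.comp_apply] at h_large
      linarith
    _ ≤ c * shearAmp L m - 1 := by gcongr
    _ ≤ ⌊c * shearAmp L m⌋₊ := (Nat.sub_one_lt_floor _).le

end IsSlowGrowth

/-! ### Slow entropy from Bowen covering numbers -/

lemma eventually_atTop_of_forall_Icc {M : ℕ → ℕ} (hM : Tendsto M atTop atTop) {P : ℕ → Prop}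
    (h : ∀ᶠ n in atTop, ∀ m, M n ≤ m → m ≤ M (n + 1) → P m) : ∀ᶠ m in atTop, P m := by
  obtain ⟨n₀, h₀⟩ := eventually_atTop.1 h
  filter_upwards [eventually_ge_atTop (M n₀)] with m hm
  have h_exists : ∃ k, m < M (n₀ + k) := by
    obtain ⟨k, hk, hk₀⟩ := ((hM.eventually_gt_atTop m).and (eventually_ge_atTop n₀)).exists
    exact ⟨k - n₀, by rwa [Nat.add_sub_cancel' hk₀]⟩
  classical
  obtain ⟨k, hk⟩ : ∃ k, Nat.find h_exists = k + 1 :=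
    Nat.exists_eq_succ_of_ne_zero fun h_zero => (Nat.find_eq_zero h_exists).1 h_zero |>.not_ge hm
  refine h₀ (n₀ + k) (Nat.le_add_right _ _) m ?_ ?_
  · exact not_lt.1 (Nat.find_min h_exists (hk ▸ k.lt_succ_self))
  · exact (hk ▸ Nat.find_spec h_exists : m < M (n₀ + (k + 1))).le

section BowenCovering

variable {X ι : Type*} [PseudoMetricSpace X] {T : X → X} {n : ℕ} {ε η : ℝ}

lemma bowenDist_lt_iff (hε : 0 < ε) {x y : X} :
    bowenDist T n x y < ε ↔ ∀ i < n, dist (T^[i] x) (T^[i] y) < ε := by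
  lift ε to ℝ≥0 using hε.le
  rw [bowenDist, NNReal.coe_lt_coe, Finset.sup_lt_iff (by simpa using hε)]
  simp only [Finset.mem_range, ← NNReal.coe_lt_coe, coe_nndist]

lemma bowenCoverNum_le_card {Z : Finset X} (hZ : ∀ y, ∃ x ∈ Z, bowenDist T n x y < ε) :
    bowenCoverNum T n ε ≤ Z.card :=
  Nat.sInf_le ⟨Z, rfl, hZ⟩

lemma continuous_bowenDist (hT : Continuous T) (x : X) : Continuous (bowenDist T n x) :=
  NNReal.continuous_coe.comp <| Continuous.finset_sup_apply fun i _ =>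
    continuous_const.nndist (hT.iterate i)

lemma exists_finset_bowenDist_lt [CompactSpace X] (hT : Continuous T) (n : ℕ) (hε : 0 < ε) :
    ∃ Z : Finset X, ∀ y, ∃ x ∈ Z, bowenDist T n x y < ε := by
  obtain ⟨Z, -, hZ⟩ := isCompact_univ.elim_nhds_subcover (fun x => {y | bowenDist T n x y < ε})
    fun x _ => (continuous_bowenDist hT x).continuousAt.eventually_lt continuousAt_const
      ((bowenDist_lt_iff hε).2 fun _ _ => by rwa [dist_self])
  exact ⟨Z, fun y => by simpa using hZ (mem_univ y)⟩

lemma card_le_bowenCoverNum [CompactSpace X] [Fintype ι] (hT : Continuous T) (hε : 0 < ε)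
    {f : ι → X}
    (hf : Pairwise fun j k => ∃ i < n, 2 * ε ≤ dist (T^[i] (f j)) (T^[i] (f k))) :
    Fintype.card ι ≤ bowenCoverNum T n ε := by
  obtain ⟨Z₀, hZ₀⟩ := exists_finset_bowenDist_lt hT n hε
  refine le_csInf ⟨_, Z₀, rfl, hZ₀⟩ ?_
  rintro _ ⟨Z, rfl, hZ⟩
  choose x hxZ hx using fun j => hZ (f j)
  refine Finset.card_le_card_of_injOn x (fun j _ => hxZ j) fun j _ k _ hjk => ?_
  by_contra h_ne
  obtain ⟨i, hi, h_sep⟩ := hf h_ne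
  have hj := (bowenDist_lt_iff hε).1 (hx j) i hi
  have hk := (bowenDist_lt_iff hε).1 (hx k) i hi
  rw [← hjk] at hk
  linarith [dist_triangle_left (T^[i] (f j)) (T^[i] (f k)) (T^[i] (x j))]

lemma bowenCoverNum_le_card_of_dist_iterate_le (hε : 0 < ε) {R : ℕ → X → X}
    (hR : ∀ i < n, ∀ x, dist (T^[i] x) (R i x) ≤ η) {Z : Finset X}
    (hZ : ∀ y, ∃ x ∈ Z, ∀ i < n, dist (R i x) (R i y) + 2 * η < ε) :
    bowenCoverNum T n ε ≤ Z.card := by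
  refine bowenCoverNum_le_card fun y => ?_
  obtain ⟨x, hxZ, hx⟩ := hZ y
  refine ⟨x, hxZ, (bowenDist_lt_iff hε).2 fun i hi => ?_⟩
  have h_model := dist_triangle4_right (T^[i] x) (T^[i] y) (R i x) (R i y)
  linarith [hx i hi, hR i hi x, hR i hi y]

lemma card_le_bowenCoverNum_of_dist_iterate_le [CompactSpace X] [Fintype ι] (hT : Continuous T)
    (hε : 0 < ε) {R : ℕ → X → X} (hR : ∀ i < n, ∀ x, dist (T^[i] x) (R i x) ≤ η) {f : ι → X}
    (hf : Pairwise fun j k => ∃ i < n, 2 * (ε + η) ≤ dist (R i (f j)) (R i (f k))) :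
    Fintype.card ι ≤ bowenCoverNum T n ε := by
  refine card_le_bowenCoverNum hT hε (f := f) fun j k hjk => ?_
  obtain ⟨i, hi, h_sep⟩ := hf hjk
  have h_model := dist_triangle4_left (T^[i] (f j)) (T^[i] (f k)) (R i (f j)) (R i (f k))
  exact ⟨i, hi, by linarith [hR i hi (f j), hR i hi (f k)]⟩

end BowenCovering

section SlowEntropy

variable {X : Type*} [PseudoMetricSpace X] {T : X → X} {L : ℕ → ℝ} {ε s t E : ℝ}

lemma HasUpperTopSlowEntropy.congr {a b : ℕ → ℝ → ℝ} (h : HasUpperTopSlowEntropy T a E)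
    (hab : ∀ᶠ n in atTop, a n = b n) : HasUpperTopSlowEntropy T b E := by
  refine Tendsto.congr (fun ε => ?_) h
  have h_limsup (t : ℝ) :
      (atTop.limsup fun n => (bowenCoverNum T n ε : ℝ≥0∞) / ENNReal.ofReal (a n t)) =
        atTop.limsup fun n => (bowenCoverNum T n ε : ℝ≥0∞) / ENNReal.ofReal (b n t) := by
    refine limsup_congr ?_
    filter_upwards [hab] with n hn
    rw [hn]
  simp only [topSlowEntFun, h_limsup]

lemma bowenCoverNum_div_ofReal_exp (T : X → X) (n : ℕ) (ε x : ℝ) :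
    (bowenCoverNum T n ε : ℝ≥0∞) / ENNReal.ofReal (Real.exp x) =
      ENNReal.ofReal (bowenCoverNum T n ε / Real.exp x) := by
  rw [ENNReal.ofReal_div_of_pos (Real.exp_pos x), ENNReal.ofReal_natCast]

lemma limsup_bowenCoverNum_div_exp_eq_zero (hL : Tendsto L atTop atTop) (hst : s < t)
    (h_le : ∀ᶠ n in atTop, (bowenCoverNum T n ε : ℝ) ≤ Real.exp (s * L n)) :
    (atTop.limsup fun n =>
      (bowenCoverNum T n ε : ℝ≥0∞) / ENNReal.ofReal (Real.exp (t * L n))) = 0 := by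
  simp only [bowenCoverNum_div_ofReal_exp]
  refine Tendsto.limsup_eq ?_
  rw [← ENNReal.ofReal_zero]
  refine ENNReal.tendsto_ofReal (squeeze_zero' (.of_forall fun n => by positivity) ?_
    (Real.tendsto_exp_neg_atTop_nhds_zero.comp (hL.const_mul_atTop (sub_pos.2 hst))))
  filter_upwards [h_le] with n hn
  calc (bowenCoverNum T n ε : ℝ) / Real.exp (t * L n)
      ≤ Real.exp (s * L n) / Real.exp (t * L n) := by gcongr
    _ = Real.exp (-((t - s) * L n)) := by rw [← Real.exp_sub]; ring_nf

lemma one_le_limsup_bowenCoverNum_div_exp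
    (h_le : ∃ᶠ n in atTop, Real.exp (t * L n) ≤ bowenCoverNum T n ε) :
    1 ≤ atTop.limsup fun n =>
      (bowenCoverNum T n ε : ℝ≥0∞) / ENNReal.ofReal (Real.exp (t * L n)) := by
  refine le_limsup_of_frequently_le (h_le.mono fun n hn => ?_) (by isBoundedDefault)
  rwa [bowenCoverNum_div_ofReal_exp, ENNReal.one_le_ofReal, one_le_div (Real.exp_pos _)]

lemma topSlowEntFun_exp_eq (hL : Tendsto L atTop atTop) (hE : 0 < E)
    (h_upper : ∀ t, E < t → ∀ᶠ n in atTop, (bowenCoverNum T n ε : ℝ) ≤ Real.exp (t * L n))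
    (h_lower : ∀ t, 0 < t → t < E →
      ∃ᶠ n in atTop, Real.exp (t * L n) ≤ bowenCoverNum T n ε) :
    topSlowEntFun T (fun n t => Real.exp (t * L n)) ε = E := by
  have h_mem {t : ℝ} (ht : 0 < t) (htE : t < E) : 0 < t ∧ 0 < atTop.limsup fun n =>
      (bowenCoverNum T n ε : ℝ≥0∞) / ENNReal.ofReal (Real.exp (t * L n)) :=
    ⟨ht, one_pos.trans_le (one_le_limsup_bowenCoverNum_div_exp (h_lower t ht htE))⟩
  refine csSup_eq_of_forall_le_of_forall_lt_exists_gt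
    ⟨E / 2, h_mem (half_pos hE) (half_lt_self hE)⟩ (fun t ht => ?_) fun t htE => ?_
  · by_contra! htE
    obtain ⟨s, hEs, hst⟩ := exists_between htE
    exact ht.2.ne' (limsup_bowenCoverNum_div_exp_eq_zero hL hst (h_upper s hEs))
  · obtain ⟨s, hs, hsE⟩ := exists_between (max_lt htE hE)
    obtain ⟨hts, hs⟩ := max_lt_iff.1 hs
    exact ⟨s, h_mem hs hsE, hts⟩

theorem hasUpperTopSlowEntropy_exp (hL : Tendsto L atTop atTop) (hE : 0 < E)
    (h_upper : ∀ ε, 0 < ε → ∀ t, E < t →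
      ∀ᶠ n in atTop, (bowenCoverNum T n ε : ℝ) ≤ Real.exp (t * L n))
    (h_lower : ∀ᶠ ε in 𝓝[>] 0, ∀ t, 0 < t → t < E →
      ∃ᶠ n in atTop, Real.exp (t * L n) ≤ bowenCoverNum T n ε) :
    HasUpperTopSlowEntropy T (fun n t => Real.exp (t * L n)) E := by
  refine tendsto_const_nhds.congr' ?_
  filter_upwards [h_lower, self_mem_nhdsWithin] with ε hε_lower hε
  exact (topSlowEntFun_exp_eq hL hE (h_upper ε hε) hε_lower).symm

end SlowEntropy

/-! ### Lifts of torus maps -/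

/-- The inclusion of the deck group `ℤ²` of `torusProj` into `ℝ²`. -/
def intVec (k : ℤ × ℤ) : ℝ × ℝ := (k.1, k.2)

/-- `F` commutes with all deck transformations, i.e. it lifts a torus map that is homotopic to the
identity. -/
def IsEquivariant (F : ℝ × ℝ → ℝ × ℝ) : Prop := ∀ z k, F (z + intVec k) = F z + intVec k

section Lift

variable {F G : ℝ × ℝ → ℝ × ℝ} {T U : Torus2 → Torus2}

lemma torusProj_add_intVec (z : ℝ × ℝ) (k : ℤ × ℤ) : torusProj (z + intVec k) = torusProj z := by
  simp [torusProj, intVec]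

lemma torusProj_eq_iff {z w : ℝ × ℝ} : torusProj z = torusProj w ↔ ∃ k, w = z + intVec k := by
  refine ⟨fun h => ?_, fun ⟨k, hk⟩ => by rw [hk, torusProj_add_intVec]⟩
  have h_coe {x y : ℝ} (hxy : (x : Torus1) = y) : ∃ a : ℤ, y = x + a := by
    obtain ⟨a, ha⟩ := (AddCircle.coe_eq_zero_iff 1).1 ((AddCircle.coe_sub 1 y x).trans
      (sub_eq_zero.2 hxy.symm))
    exact ⟨a, by rw [← zsmul_one a, ha, add_sub_cancel]⟩
  obtain ⟨a, ha⟩ := h_coe (congrArg Prod.fst h)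
  obtain ⟨b, hb⟩ := h_coe (congrArg Prod.snd h)
  exact ⟨(a, b), Prod.ext ha hb⟩

lemma isOpenQuotientMap_torusProj : IsOpenQuotientMap torusProj :=
  QuotientAddGroup.isOpenQuotientMap_mk.prodMap QuotientAddGroup.isOpenQuotientMap_mk

lemma continuous_torusProj : Continuous torusProj := isOpenQuotientMap_torusProj.continuous

lemma surjective_torusProj : Function.Surjective torusProj := isOpenQuotientMap_torusProj.surjective

lemma dist_coe_le_abs_sub (x y : ℝ) : dist (x : Torus1) (y : Torus1) ≤ |x - y| := by
  rw [dist_eq_norm, ← AddCircle.coe_sub]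
  exact QuotientAddGroup.norm_mk_le_norm

lemma dist_coe_eq_abs_sub {x y : ℝ} (h : |x - y| ≤ 1 / 2) :
    dist (x : Torus1) (y : Torus1) = |x - y| := by
  rw [dist_eq_norm, ← AddCircle.coe_sub, AddCircle.norm_coe_eq_abs_iff 1 one_ne_zero, abs_one]
  exact h

lemma dist_torusProj_le (z w : ℝ × ℝ) : dist (torusProj z) (torusProj w) ≤ dist z w :=
  max_le_max (dist_coe_le_abs_sub _ _) (dist_coe_le_abs_sub _ _)

lemma dist_torusProj_eq {z w : ℝ × ℝ} (h : dist z w ≤ 1 / 2) :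
    dist (torusProj z) (torusProj w) = dist z w :=
  congrArg₂ max (dist_coe_eq_abs_sub ((le_max_left _ _).trans h))
    (dist_coe_eq_abs_sub ((le_max_right _ _).trans h))

lemma exists_mem_Icc_add_intVec (z : ℝ × ℝ) : ∃ z₀ ∈ Icc (0 : ℝ × ℝ) 1, ∃ k, z = z₀ + intVec k :=
  ⟨(Int.fract z.1, Int.fract z.2), ⟨⟨Int.fract_nonneg _, Int.fract_nonneg _⟩,
    (Int.fract_lt_one _).le, (Int.fract_lt_one _).le⟩, (⌊z.1⌋, ⌊z.2⌋),
    Prod.ext (Int.fract_add_floor _).symm (Int.fract_add_floor _).symm⟩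

lemma exists_forall_norm_le_of_periodic {E : Type*} [NormedAddCommGroup E] {g : ℝ × ℝ → E}
    (hg : Continuous g) (hper : ∀ k, Function.Periodic g (intVec k)) :
    ∃ C > 0, ∀ z, ‖g z‖ ≤ C := by
  obtain ⟨C, hC⟩ := (isCompact_Icc (a := (0 : ℝ × ℝ)) (b := 1)).exists_bound_of_continuousOn
    hg.continuousOn
  refine ⟨max C 1, by positivity, fun z => ?_⟩
  obtain ⟨z₀, hz₀, k, rfl⟩ := exists_mem_Icc_add_intVec z
  exact (hper k z₀ ▸ hC z₀ hz₀).trans (le_max_left _ _)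

namespace IsEquivariant

lemma comp (hF : IsEquivariant F) (hG : IsEquivariant G) : IsEquivariant (F ∘ G) := fun z k => by
  rw [Function.comp_apply, Function.comp_apply, hG, hF]

lemma exists_dist_self_le (hF : IsEquivariant F) (hc : Continuous F) :
    ∃ C > 0, ∀ z, dist (F z) z ≤ C := by
  simp_rw [dist_eq_norm]
  exact exists_forall_norm_le_of_periodic (hc.sub continuous_id) fun k z => by
    simp only [hF z k, add_sub_add_right_eq_sub]

lemma exists_lipschitzWith (hF : IsEquivariant F) (hc : ContDiff ℝ 1 F) :
    ∃ K > 0, LipschitzWith K F := by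
  obtain ⟨C, hC₀, hC⟩ := exists_forall_norm_le_of_periodic (hc.continuous_fderiv one_ne_zero)
    fun k z => by
      rw [← fderiv_comp_add_right]
      simp_rw [hF _ k]
      rw [fderiv_add_const]
  lift C to ℝ≥0 using hC₀.le
  exact ⟨C, mod_cast hC₀, lipschitzWith_of_nnnorm_fderiv_le (hc.differentiable one_ne_zero) hC⟩

end IsEquivariant

/-- The torus map with lift `F`; meaningful when `F` is equivariant. -/
def descend (F : ℝ × ℝ → ℝ × ℝ) : Torus2 → Torus2 :=
  fun p => torusProj (F (Function.surjInv surjective_torusProj p))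

lemma IsEquivariant.isLiftOf_descend (hF : IsEquivariant F) : IsLiftOf F (descend F) := by
  intro z
  obtain ⟨k, hk⟩ := torusProj_eq_iff.1 (Function.surjInv_eq surjective_torusProj (torusProj z))
  rw [descend, ← torusProj_add_intVec (F (Function.surjInv _ _)) k, ← hF, ← hk]

namespace IsLiftOf

lemma comp (hF : IsLiftOf F T) (hG : IsLiftOf G U) : IsLiftOf (F ∘ G) (T ∘ U) := fun z =>
  (hF (G z)).trans (congrArg T (hG z))

lemma iterate (hF : IsLiftOf F T) (n : ℕ) : IsLiftOf F^[n] T^[n] := by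
  induction n with
  | zero => exact fun _ => rfl
  | succ n ih => exact ih.comp hF

lemma unique (hT : IsLiftOf F T) (hU : IsLiftOf F U) : T = U :=
  surjective_torusProj.injective_comp_right (funext fun z => (hT z).symm.trans (hU z))

lemma continuous (hT : IsLiftOf F T) (hF : Continuous F) : Continuous T :=
  isOpenQuotientMap_torusProj.isQuotientMap.continuous_iff.2
    ((continuous_torusProj.comp hF).congr hT)

end IsLiftOf

end Lift

/-! ### Smooth families of periodic functions -/

lemma contDiff_iteratedFDeriv_param {D E G : Type*} [NormedAddCommGroup D] [NormedSpace ℝ D]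
    [NormedAddCommGroup E] [NormedSpace ℝ E] [NormedAddCommGroup G] [NormedSpace ℝ G]
    {f : D → E → G} (hf : ContDiff ℝ ∞ (Function.uncurry f)) (j : ℕ) :
    ContDiff ℝ ∞ fun p : D × E => iteratedFDeriv ℝ j (f p.1) p.2 := by
  induction j with
  | zero =>
    simp_rw [iteratedFDeriv_zero_eq_comp]
    exact (LinearIsometryEquiv.contDiff _).comp hf
  | succ j ih =>
    simp_rw [iteratedFDeriv_succ_eq_comp_left]
    have h_fderiv : ContDiff ℝ ∞ fun p : D × E => fderiv ℝ (iteratedFDeriv ℝ j (f p.1)) p.2 :=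
      ContDiff.fderiv (m := ∞) (f := fun p : D × E => iteratedFDeriv ℝ j (f p.1)) (g := Prod.snd)
        (ih.comp (contDiff_fst.fst.prodMk contDiff_snd)) contDiff_snd (by simp)
    exact (LinearIsometryEquiv.contDiff (𝕜 := ℝ) (E := E →L[ℝ] E [×j]→L[ℝ] G) _).comp h_fderiv

lemma eventually_norm_iteratedFDeriv_le_of_periodic {D E : Type*} [NormedAddCommGroup D]
    [NormedSpace ℝ D] [NormedAddCommGroup E] [NormedSpace ℝ E] {f : D → ℝ × ℝ → E} {c₀ : D} {η : ℝ}
    (hf : ContDiff ℝ ∞ (Function.uncurry f)) (hper : ∀ c k, Function.Periodic (f c) (intVec k))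
    (h₀ : f c₀ = 0) (n : ℕ) (hη : 0 < η) :
    ∀ᶠ c in 𝓝 c₀, ∀ j ≤ n, ∀ z, ‖iteratedFDeriv ℝ j (f c) z‖ ≤ η := by
  refine (eventually_all_finite (finite_Iic n)).2 fun j _ => ?_
  have h_cube : ∀ᶠ c in 𝓝 c₀, ∀ z ∈ Icc (0 : ℝ × ℝ) 1, ‖iteratedFDeriv ℝ j (f c) z‖ < η :=
    isCompact_Icc.eventually_forall_of_forall_eventually fun z _ =>
      (contDiff_iteratedFDeriv_param hf j).continuous.norm.continuousAt.eventually_lt_const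
        (by simp [h₀, hη, Pi.zero_def])
  filter_upwards [h_cube] with c hc z
  obtain ⟨z₀, hz₀, k, rfl⟩ := exists_mem_Icc_add_intVec z
  rw [← iteratedFDeriv_comp_add_right]
  simp_rw [hper c k _]
  exact (hc _ hz₀).le

/-! ### Area-preserving diffeomorphisms of the torus -/

lemma measurePreserving_prod_shear {X G : Type*} [MeasurableSpace X] [MeasurableSpace G]
    [AddGroup G] [MeasurableAdd₂ G] {μ : Measure X} {ν : Measure G} [SFinite μ] [SFinite ν]
    [ν.IsAddRightInvariant] {g : X → G} (hg : Measurable g) :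
    MeasurePreserving (fun p : X × G => (p.1, p.2 + g p.1)) (μ.prod ν) (μ.prod ν) :=
  (MeasurePreserving.id μ).skew_product (g := fun x y => y + g x)
    (measurable_snd.add (hg.comp measurable_fst))
    (Eventually.of_forall fun x => map_add_right_eq_self ν (g x))

instance : IsProbabilityMeasure (volume : Measure Torus1) := ⟨by simp⟩

lemma isEquivariant_shear {φ : ℝ → ℝ} (hper : Function.Periodic φ 1) :
    IsEquivariant fun z => (z.1, z.2 + φ z.1) := fun z k => by
  have h_int : φ (z.1 + k.1) = φ z.1 := by simpa using hper.int_mul k.1 z.1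
  simp [intVec, h_int, add_right_comm]

lemma exists_continuous_circle_lift {φ : ℝ → ℝ} (hφ : Continuous φ) (hper : Function.Periodic φ 1) :
    ∃ g : Torus1 → Torus1, Continuous g ∧ ∀ x : ℝ, g x = φ x := by
  have h_coe : Function.Periodic (fun x => (φ x : Torus1)) 1 := hper.comp _
  exact ⟨h_coe.lift, QuotientAddGroup.isOpenQuotientMap_mk.isQuotientMap.continuous_iff.2
    (continuous_quotient_mk'.comp hφ), fun _ => rfl⟩

lemma measurePreserving_descend_shear {φ : ℝ → ℝ} (hφ : Continuous φ)
    (hper : Function.Periodic φ 1) :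
    MeasurePreserving (descend fun z => (z.1, z.2 + φ z.1)) volume volume := by
  obtain ⟨g, hg, hgφ⟩ := exists_continuous_circle_lift hφ hper
  have h_descend : (descend fun z => (z.1, z.2 + φ z.1)) = fun p => (p.1, p.2 + g p.1) :=
    (isEquivariant_shear hper).isLiftOf_descend.unique fun z => by simp [torusProj, hgφ]
  exact h_descend ▸ measurePreserving_prod_shear hg.measurable

lemma squeeze_add {θ : ℝ → ℝ} (hper : Function.Periodic θ 1) {a : ℕ} {v : ℝ × ℝ} {k : ℤ}
    (hk : v.2 - a * v.1 = k) (z : ℝ × ℝ) :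
    ((z + v).1 - θ ((z + v).2 - a * (z + v).1) / a, (z + v).2 - θ ((z + v).2 - a * (z + v).1)) =
      (z.1 - θ (z.2 - a * z.1) / a, z.2 - θ (z.2 - a * z.1)) + v := by
  have h_arg : (z + v).2 - a * (z + v).1 = z.2 - a * z.1 + k := by
    simp only [Prod.fst_add, Prod.snd_add]
    linear_combination hk
  have h_int : θ (z.2 - a * z.1 + k) = θ (z.2 - a * z.1) := by
    simpa using hper.int_mul k (z.2 - a * z.1)
  rw [h_arg, h_int]
  ext <;> simp only [Prod.fst_add, Prod.snd_add] <;> ring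

lemma isEquivariant_squeeze {θ : ℝ → ℝ} (hper : Function.Periodic θ 1) (a : ℕ) :
    IsEquivariant fun z => (z.1 - θ (z.2 - a * z.1) / a, z.2 - θ (z.2 - a * z.1)) := fun z k =>
  squeeze_add hper (k := k.2 - a * k.1) (by simp [intVec]) z

lemma measurePreserving_descend_squeeze {θ : ℝ → ℝ} (hθ : Continuous θ)
    (hper : Function.Periodic θ 1) {a : ℕ} (ha : a ≠ 0) :
    MeasurePreserving (descend fun z => (z.1 - θ (z.2 - a * z.1) / a, z.2 - θ (z.2 - a * z.1)))
      volume volume := by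
  obtain ⟨g, hg, hgθ⟩ := exists_continuous_circle_lift (hθ.neg.div_const (a : ℝ))
    fun t => by simp only [Pi.neg_apply, hper t]
  have h_vert (g : Torus1 → Torus1) (hg : Continuous g) :
      MeasurePreserving (fun p : Torus2 => (p.1, p.2 + g p.1)) volume volume :=
    measurePreserving_prod_shear hg.measurable
  have h_swap : MeasurePreserving (Prod.swap : Torus2 → Torus2) volume volume :=
    Measure.measurePreserving_swap
  have h_mp := (h_vert (a • ·) (continuous_nsmul a)).comp <| h_swap.comp <| (h_vert g hg).comp <|
    h_swap.comp (h_vert (fun x => -(a • x)) (continuous_nsmul a).neg)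
  convert h_mp
  refine (isEquivariant_squeeze hper a).isLiftOf_descend.unique fun z => ?_
  have h_smul (x : ℝ) : a • (x : Torus1) = (a * x : ℝ) := by
    rw [← AddCircle.coe_nsmul, nsmul_eq_mul]
  have h_arg : (z.2 : Torus1) + -((a * z.1 : ℝ) : Torus1) = (z.2 - a * z.1 : ℝ) := by
    rw [← sub_eq_add_neg, AddCircle.coe_sub]
  simp only [torusProj, Function.comp_apply, Prod.swap_prod_mk, h_smul, h_arg, hgθ,
    ← AddCircle.coe_add, Pi.neg_apply]
  congr 2
  · ring
  · field_simp
    ring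

/-- An area-preserving `C^∞` diffeomorphism of `𝕋²` homotopic to the identity, encoded by an
equivariant lift to `ℝ²`. These are the conjugacies of the Anosov–Katok construction. -/
structure TorusDiffeo extends (ℝ × ℝ) ≃ (ℝ × ℝ) where
  contDiff_toFun : ContDiff ℝ ∞ toFun
  contDiff_invFun : ContDiff ℝ ∞ invFun
  isEquivariant_toFun : IsEquivariant toFun
  measurePreserving_descend : MeasurePreserving (descend toFun) volume volume

namespace TorusDiffeo

instance : CoeFun TorusDiffeo fun _ => ℝ × ℝ → ℝ × ℝ := ⟨fun h => h.toEquiv⟩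

variable (g h : TorusDiffeo)

variable {g h} in
lemma ext (h_eq : ∀ z, g z = h z) : g = h := by
  cases g
  cases h
  congr
  exact Equiv.ext h_eq

/-- The torus map with lift `h`. -/
def map : Torus2 → Torus2 := descend h

lemma contDiff : ContDiff ℝ ∞ h := h.contDiff_toFun

lemma isEquivariant : IsEquivariant h := h.isEquivariant_toFun

lemma isLiftOf_map : IsLiftOf h h.map := h.isEquivariant.isLiftOf_descend

lemma continuous_map : Continuous h.map := h.isLiftOf_map.continuous h.contDiff.continuous

lemma measurePreserving_map : MeasurePreserving h.map volume volume := h.measurePreserving_descend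

lemma isEquivariant_symm : IsEquivariant h.toEquiv.symm := fun z k => by
  rw [Equiv.symm_apply_eq, h.isEquivariant, Equiv.apply_symm_apply]

lemma measurePreserving_descend_symm :
    MeasurePreserving (descend h.toEquiv.symm) volume volume := by
  have h_lift := h.isEquivariant_symm.isLiftOf_descend
  have h_id : descend h.toEquiv.symm ∘ h.map = id :=
    (h_lift.comp h.isLiftOf_map).unique fun z => by simp
  have h_meas := (h_lift.continuous h.contDiff_invFun.continuous).measurable
  refine ⟨h_meas, ?_⟩
  conv_lhs => rw [← h.measurePreserving_map.map_eq]
  rw [Measure.map_map h_meas h.measurePreserving_map.measurable, h_id, Measure.map_id]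

/-- The inverse diffeomorphism. -/
def symm : TorusDiffeo where
  toEquiv := h.toEquiv.symm
  contDiff_toFun := h.contDiff_invFun
  contDiff_invFun := h.contDiff_toFun
  isEquivariant_toFun := h.isEquivariant_symm
  measurePreserving_descend := h.measurePreserving_descend_symm

/-- The composition `h ∘ g`. -/
def trans : TorusDiffeo where
  toEquiv := g.toEquiv.trans h.toEquiv
  contDiff_toFun := h.contDiff.comp g.contDiff
  contDiff_invFun := g.contDiff_invFun.comp h.contDiff_invFun
  isEquivariant_toFun := h.isEquivariant.comp g.isEquivariant
  measurePreserving_descend := by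
    have h_comp : descend (h ∘ g) = h.map ∘ g.map :=
      (h.isEquivariant.comp g.isEquivariant).isLiftOf_descend.unique
        (h.isLiftOf_map.comp g.isLiftOf_map)
    exact h_comp ▸ h.measurePreserving_map.comp g.measurePreserving_map

/-- The lift `z ↦ z + v` of a translation of the torus. -/
def translation (v : ℝ × ℝ) : TorusDiffeo where
  toEquiv := Equiv.addRight v
  contDiff_toFun := contDiff_id.add contDiff_const
  contDiff_invFun := contDiff_id.add contDiff_const
  isEquivariant_toFun := fun z k => add_right_comm z (intVec k) v
  measurePreserving_descend := by
    have h_descend : descend (Equiv.addRight v) = fun p => p + torusProj v :=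
      (IsEquivariant.isLiftOf_descend fun z k => add_right_comm z (intVec k) v).unique fun _ => rfl
    exact h_descend ▸ (measurePreserving_add_right volume (v.1 : Torus1)).prod
      (measurePreserving_add_right volume (v.2 : Torus1))

@[simp] lemma apply_symm_apply (z : ℝ × ℝ) : h (h.symm z) = z := h.toEquiv.apply_symm_apply z

@[simp] lemma symm_apply_apply (z : ℝ × ℝ) : h.symm (h z) = z := h.toEquiv.symm_apply_apply z

lemma map_trans (p : Torus2) : (g.trans h).map p = h.map (g.map p) :=
  congrFun ((g.trans h).isLiftOf_map.unique (h.isLiftOf_map.comp g.isLiftOf_map)) p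

@[simp] lemma map_map_symm (p : Torus2) : h.map (h.symm.map p) = p :=
  congrFun ((h.isLiftOf_map.comp h.symm.isLiftOf_map).unique (U := id) fun z => by simp) p

@[simp] lemma map_symm_map (p : Torus2) : h.symm.map (h.map p) = p := h.symm.map_map_symm p

/-- The time `β` map of the periodic flow conjugated by `h` to the horizontal translation flow. -/
def flow (β : ℝ) : TorusDiffeo := (h.symm.trans (translation (β, 0))).trans h

lemma flow_apply (β : ℝ) (z : ℝ × ℝ) : h.flow β z = h (h.symm z + (β, 0)) := rfl

lemma symm_flow (β : ℝ) : (h.flow β).symm = h.flow (-β) := ext fun z => by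
  change h (h.symm z + -(β, 0)) = h (h.symm z + (-β, 0))
  simp

lemma flow_add_apply (β γ : ℝ) (z : ℝ × ℝ) : h.flow (β + γ) z = h.flow β (h.flow γ z) := by
  simp [flow_apply, add_assoc, add_comm β]

lemma iterate_map_flow (β : ℝ) (i : ℕ) : (h.flow β).map^[i] = (h.flow (i * β)).map := by
  have h_iter (z : ℝ × ℝ) : (h.flow β)^[i] z = h.flow (i * β) z := by
    induction i with
    | zero => simp [flow_apply, ← Prod.zero_eq_mk]
    | succ i ih => rw [Function.iterate_succ_apply', ih, ← flow_add_apply, Nat.cast_succ,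
        add_one_mul, add_comm β]
  exact ((h.flow β).isLiftOf_map.iterate i).unique fun z => by
    rw [h_iter, (h.flow (i * β)).isLiftOf_map]

lemma map_flow_add_intCast (β : ℝ) (k : ℤ) : (h.flow (β + k)).map = (h.flow β).map := by
  refine (h.flow (β + k)).isLiftOf_map.unique fun z => ?_
  have h_add : h.symm z + (β + k, 0) = h.symm z + (β, 0) + intVec (k, 0) := by
    simp [intVec, add_assoc]
  rw [← (h.flow β).isLiftOf_map, flow_apply, flow_apply, h_add, h.isEquivariant,
    torusProj_add_intVec]

/-- The angular coordinate in which the flow of `h` is the linear flow on the circle. -/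
def angle (p : Torus2) : Torus1 := (h.symm.map p).1

lemma continuous_angle : Continuous h.angle := continuous_fst.comp h.symm.continuous_map

lemma measurePreserving_angle : MeasurePreserving h.angle volume volume :=
  measurePreserving_fst.comp h.symm.measurePreserving_map

lemma angle_map_flow (β : ℝ) (p : Torus2) : h.angle ((h.flow β).map p) = h.angle p + β := by
  obtain ⟨z, rfl⟩ := surjective_torusProj p
  simp only [angle, ← (h.flow β).isLiftOf_map z, ← h.symm.isLiftOf_map _, flow_apply,
    symm_apply_apply]
  rfl

/-- The vertical shear `(x, y) ↦ (x, y + φ x)`. -/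
def shear {φ : ℝ → ℝ} (hφ : ContDiff ℝ ∞ φ) (hper : Function.Periodic φ 1) : TorusDiffeo where
  toFun z := (z.1, z.2 + φ z.1)
  invFun z := (z.1, z.2 - φ z.1)
  left_inv _ := by simp
  right_inv _ := by simp
  contDiff_toFun := contDiff_fst.prodMk (contDiff_snd.add (hφ.comp contDiff_fst))
  contDiff_invFun := contDiff_fst.prodMk (contDiff_snd.sub (hφ.comp contDiff_fst))
  isEquivariant_toFun := isEquivariant_shear hper
  measurePreserving_descend := measurePreserving_descend_shear hφ.continuous hper

/-- The map `(x, y) ↦ (x - θ (y - a x) / a, y - θ (y - a x))`, i.e. the horizontal shear by `-θ / a`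
conjugated by the torus automorphism `(x, y) ↦ (x, y + a x)`. When `θ t` is close to `t` on most of
`[0, 1)`, it maps most of the torus close to the curve `y = a x`. -/
def squeeze {θ : ℝ → ℝ} (hθ : ContDiff ℝ ∞ θ) (hper : Function.Periodic θ 1) {a : ℕ}
    (ha : a ≠ 0) : TorusDiffeo where
  toFun z := (z.1 - θ (z.2 - a * z.1) / a, z.2 - θ (z.2 - a * z.1))
  invFun z := (z.1 + θ (z.2 - a * z.1) / a, z.2 + θ (z.2 - a * z.1))
  left_inv _ := by simp [mul_sub, mul_div_cancel₀, ha]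
  right_inv _ := by simp [mul_add, mul_div_cancel₀, ha]
  contDiff_toFun := by fun_prop
  contDiff_invFun := by fun_prop
  isEquivariant_toFun := isEquivariant_squeeze hper a
  measurePreserving_descend := measurePreserving_descend_squeeze hθ.continuous hper ha

end TorusDiffeo

/-! ### Squeezing the torus onto a curve -/

/-- The Abel means `1/2 - ∑ rᵏ sin (2πkt) / (πk)` of the Fourier series of the sawtooth function.
They are smooth in `t` for `r < 1`, and for `r = 1` the value is `t` on `(0, 1)`. -/
def abelSawtooth (r t : ℝ) : ℝ :=
  1 / 2 -
    Real.arctan (r * Real.sin (2 * Real.pi * t) / (1 - r * Real.cos (2 * Real.pi * t))) / Real.pi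

lemma abelSawtooth_periodic (r : ℝ) : Function.Periodic (abelSawtooth r) 1 := fun t => by
  simp only [abelSawtooth, mul_add, mul_one, Real.sin_add_two_pi, Real.cos_add_two_pi]

lemma contDiff_abelSawtooth {r : ℝ} (hr : r ∈ Ico (0 : ℝ) 1) : ContDiff ℝ ∞ (abelSawtooth r) := by
  have h_den (t : ℝ) : 1 - r * Real.cos (2 * Real.pi * t) ≠ 0 := by
    nlinarith [Real.cos_le_one (2 * Real.pi * t), hr.1, hr.2]
  have h_arg : ContDiff ℝ ∞ fun t : ℝ =>
      r * Real.sin (2 * Real.pi * t) / (1 - r * Real.cos (2 * Real.pi * t)) :=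
    ContDiff.div (by fun_prop) (by fun_prop) h_den
  exact contDiff_const.sub (h_arg.arctan.div_const _)

lemma abs_abelSawtooth_le_one (r t : ℝ) : |abelSawtooth r t| ≤ 1 := by
  set u := r * Real.sin (2 * Real.pi * t) / (1 - r * Real.cos (2 * Real.pi * t))
  have h_upper : Real.arctan u / Real.pi < 1 / 2 :=
    (div_lt_iff₀ Real.pi_pos).2 (by linarith [Real.arctan_lt_pi_div_two u])
  have h_lower : -(1 / 2) < Real.arctan u / Real.pi :=
    (lt_div_iff₀ Real.pi_pos).2 (by linarith [Real.neg_pi_div_two_lt_arctan u])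
  exact abs_le.2 ⟨by unfold abelSawtooth; linarith, by unfold abelSawtooth; linarith⟩

lemma abelSawtooth_one {t : ℝ} (ht : t ∈ Ioo (0 : ℝ) 1) : abelSawtooth 1 t = t := by
  have h_sin : Real.sin (Real.pi * t) ≠ 0 :=
    (Real.sin_pos_of_pos_of_lt_pi (by nlinarith [Real.pi_pos, ht.1])
      (by nlinarith [Real.pi_pos, ht.2])).ne'
  have h_cot : 1 * Real.sin (2 * Real.pi * t) / (1 - 1 * Real.cos (2 * Real.pi * t)) =
      Real.tan (Real.pi / 2 - Real.pi * t) := by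
    rw [Real.tan_pi_div_two_sub, Real.tan_eq_sin_div_cos, inv_div, mul_assoc, Real.sin_two_mul,
      Real.cos_two_mul, Real.cos_sq']
    have h_sq : 1 - (2 * (1 - Real.sin (Real.pi * t) ^ 2) - 1) =
        2 * Real.sin (Real.pi * t) ^ 2 := by ring
    rw [one_mul, one_mul, h_sq]
    field_simp
  rw [abelSawtooth, h_cot, Real.arctan_tan (by nlinarith [Real.pi_pos, ht.2])
    (by nlinarith [Real.pi_pos, ht.1])]
  field_simp
  ring

lemma continuousAt_abelSawtooth {t : ℝ} (ht : t ∈ Ioo (0 : ℝ) 1) :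
    ContinuousAt (Function.uncurry abelSawtooth) (1, t) := by
  have h_cos : Real.cos (2 * Real.pi * t) ≠ 1 := fun h => by
    obtain ⟨k, hk⟩ := (Real.cos_eq_one_iff _).1 h
    have h_int : (k : ℝ) = t := by
      apply mul_right_cancel₀ Real.two_pi_pos.ne'
      rw [hk, mul_comm]
    have h_pos : 0 < k := by exact_mod_cast h_int ▸ ht.1
    have h_lt : k < 1 := by exact_mod_cast h_int ▸ ht.2
    omega
  have h_den : 1 - 1 * Real.cos (2 * Real.pi * t) ≠ 0 := by
    rw [one_mul]
    exact sub_ne_zero.2 h_cos.symm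
  unfold Function.uncurry abelSawtooth
  refine continuousAt_const.sub (ContinuousAt.div_const ?_ _)
  exact Real.continuous_arctan.continuousAt.comp
    (ContinuousAt.div (by fun_prop) (by fun_prop) h_den)

lemma exists_smooth_sawtooth {ε : ℝ} (hε : 0 < ε) :
    ∃ θ : ℝ → ℝ, ContDiff ℝ ∞ θ ∧ Function.Periodic θ 1 ∧ (∀ t, |θ t| ≤ 1) ∧
      ∀ t ∈ Icc ε (1 - ε), |θ t - t| ≤ ε := by
  have h_near : ∀ t ∈ Icc ε (1 - ε), ∀ᶠ z : ℝ × ℝ in 𝓝 (1, t),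
      |abelSawtooth z.1 z.2 - z.2| ≤ ε := by
    intro t ht
    have ht' : t ∈ Ioo (0 : ℝ) 1 := ⟨hε.trans_le ht.1, by linarith [ht.2]⟩
    have h_lim : Tendsto (fun z : ℝ × ℝ => |abelSawtooth z.1 z.2 - z.2|) (𝓝 (1, t))
        (𝓝 |abelSawtooth 1 t - t|) := ((continuousAt_abelSawtooth ht').sub continuousAt_snd).abs
    rw [abelSawtooth_one ht', sub_self, abs_zero] at h_lim
    exact h_lim.eventually_le_const hε
  have h_unif := isCompact_Icc.eventually_forall_of_forall_eventually
    (P := fun r t => |abelSawtooth r t - t| ≤ ε) h_near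
  obtain ⟨r, hr_unif, hr⟩ := ((h_unif.filter_mono nhdsWithin_le_nhds).and
    (Ico_mem_nhdsLT (zero_lt_one (α := ℝ)))).exists
  exact ⟨abelSawtooth r, contDiff_abelSawtooth hr, abelSawtooth_periodic r,
    abs_abelSawtooth_le_one r, hr_unif⟩

lemma fract_mem_Icc_of_lt_norm {u ε : ℝ} (hu : ε < ‖(u : Torus1)‖) :
    Int.fract u ∈ Icc ε (1 - ε) := by
  rw [UnitAddCircle.norm_eq] at hu
  have h_floor := hu.trans_le (round_le u ⌊u⌋)
  have h_ceil := hu.trans_le (round_le u (⌊u⌋ + 1))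
  push_cast at h_ceil
  rw [abs_of_nonneg (sub_nonneg.2 (Int.floor_le u))] at h_floor
  rw [abs_of_nonpos (by linarith [Int.lt_floor_add_one u])] at h_ceil
  exact ⟨h_floor.le, by rw [Int.fract]; linarith⟩

lemma volume_norm_sub_nsmul_le (a : ℕ) (ε : ℝ) :
    volume {p : Torus2 | ‖p.2 - a • p.1‖ ≤ ε} ≤ ENNReal.ofReal (2 * ε) := by
  have h_mp : MeasurePreserving (fun p : Torus2 => p.2 + -(a • p.1)) volume volume :=
    measurePreserving_snd.comp
      (measurePreserving_prod_shear (continuous_nsmul a).neg.measurable)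
  have h_preimage : {p : Torus2 | ‖p.2 - a • p.1‖ ≤ ε} =
      (fun p : Torus2 => p.2 + -(a • p.1)) ⁻¹' Metric.closedBall 0 ε := by
    ext p
    simp [sub_eq_add_neg]
  rw [h_preimage, h_mp.measure_preimage Metric.isClosed_closedBall.nullMeasurableSet,
    AddCircle.volume_closedBall]
  exact ENNReal.ofReal_le_ofReal (min_le_right _ _)

namespace TorusDiffeo

section Squeeze

variable {θ : ℝ → ℝ} (hθ : ContDiff ℝ ∞ θ) (hper : Function.Periodic θ 1) {a : ℕ} (ha : a ≠ 0)

lemma flow_trans_squeeze (h : TorusDiffeo) {β : ℝ} {k : ℤ} (hk : a * β = k) :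
    ((squeeze hθ hper ha).trans h).flow β = h.flow β := by
  have h_comm (w : ℝ × ℝ) :
      squeeze hθ hper ha (w + (β, 0)) = squeeze hθ hper ha w + (β, 0) :=
    squeeze_add hper (k := -k) (by simp [hk]) w
  have h_symm (z : ℝ × ℝ) :
      ((squeeze hθ hper ha).trans h).symm z = (squeeze hθ hper ha).symm (h.symm z) := rfl
  refine ext fun z => ?_
  rw [flow_apply, flow_apply, h_symm]
  exact congrArg h ((h_comm _).trans (by rw [apply_symm_apply]))

lemma dist_symm_squeeze_fst_le (h_le : ∀ t, |θ t| ≤ 1) (p : Torus2) :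
    dist ((squeeze hθ hper ha).symm.map p).1 p.1 ≤ 1 / a := by
  obtain ⟨z, rfl⟩ := surjective_torusProj p
  rw [← isLiftOf_map]
  refine (dist_coe_le_abs_sub _ _).trans ?_
  change |z.1 + θ (z.2 - a * z.1) / a - z.1| ≤ 1 / a
  rw [add_sub_cancel_left, abs_div, Nat.abs_cast]
  gcongr
  exact h_le _

lemma dist_squeeze_curve_le (h_le : ∀ t, |θ t| ≤ 1) {ε : ℝ}
    (h_near : ∀ t ∈ Icc ε (1 - ε), |θ t - t| ≤ ε) {p : Torus2} (hp : ε < ‖p.2 - a • p.1‖) :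
    dist ((squeeze hθ hper ha).map p) (p.1, a • p.1) ≤ max (1 / a : ℝ) ε := by
  obtain ⟨z, rfl⟩ := surjective_torusProj p
  set u := z.2 - a * z.1 with hu
  have h_fract : θ u = θ (Int.fract u) := by
    simpa using (hper.sub_int_mul_eq ⌊u⌋ (x := u)).symm
  have h_smul : a • (z.1 : Torus1) = (a * z.1 : ℝ) := by
    rw [← AddCircle.coe_nsmul, nsmul_eq_mul]
  have h_mem : Int.fract u ∈ Icc ε (1 - ε) := fract_mem_Icc_of_lt_norm <| by
    rwa [hu, AddCircle.coe_sub, ← h_smul]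
  have h_curve : ((torusProj z).1, a • (torusProj z).1) = torusProj (z.1, a * z.1 + ⌊u⌋) := by
    refine Prod.ext rfl (h_smul.trans ?_)
    simp [torusProj]
  rw [← isLiftOf_map, h_curve]
  refine (dist_torusProj_le _ _).trans (max_le_max ?_ ?_)
  · change |z.1 - θ u / a - z.1| ≤ 1 / a
    rw [sub_sub_cancel_left, abs_neg, abs_div, Nat.abs_cast]
    gcongr
    exact h_le u
  · change |z.2 - θ u - (a * z.1 + ⌊u⌋)| ≤ ε
    have h_eq : z.2 - θ u - (a * z.1 + ⌊u⌋) = Int.fract u - θ (Int.fract u) := by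
      rw [h_fract, Int.fract, hu]
      ring
    rw [h_eq, abs_sub_comm]
    exact h_near _ h_mem

end Squeeze

lemma exists_angle_section (h : TorusDiffeo) {q : ℕ} (hq : q ≠ 0) {δ : ℝ} (hδ : 0 < δ) :
    ∃ P : TorusDiffeo, (∀ (β : ℝ) (k : ℤ), q * β = k → P.flow β = h.flow β) ∧
      (∀ p, dist (P.angle p) (h.angle p) ≤ δ) ∧
      ∃ c : Torus1 → Torus2, Continuous c ∧
        volume {p | δ < dist p (c (P.angle p))} ≤ ENNReal.ofReal δ := by
  obtain ⟨η, hη, h_unif⟩ := Metric.uniformContinuous_iff.1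
    (CompactSpace.uniformContinuous_of_continuous h.continuous_map) δ hδ
  set ε := min (η / 2) (δ / 2)
  have hε : 0 < ε := by positivity
  obtain ⟨θ, hθ, hper, h_le, h_near⟩ := exists_smooth_sawtooth hε
  obtain ⟨N, hN⟩ := exists_nat_gt (1 / ε)
  have hN_pos : 0 < N := by exact_mod_cast (one_div_pos.2 hε).trans hN
  have ha : q * N ≠ 0 := mul_ne_zero hq hN_pos.ne'
  have h_inv : 1 / ((q * N : ℕ) : ℝ) ≤ ε := by
    have h_le_mul : (N : ℝ) ≤ (q * N : ℕ) :=
      Nat.cast_le.2 (Nat.le_mul_of_pos_left N (Nat.pos_of_ne_zero hq))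
    exact (one_div_le hε (by positivity)).1 (hN.le.trans h_le_mul)
  set A := squeeze hθ hper ha
  refine ⟨A.trans h, fun β k hk => ?_, fun p => ?_, fun x => h.map (x, (q * N) • x), ?_, ?_⟩
  · refine flow_trans_squeeze hθ hper ha h (k := N * k) ?_
    push_cast
    rw [← hk]
    ring
  · have h_angle : (A.trans h).angle p = (A.symm.map (h.symm.map p)).1 :=
      congrArg Prod.fst (map_trans h.symm A.symm p)
    rw [h_angle]
    exact (dist_symm_squeeze_fst_le hθ hper ha h_le _).trans (h_inv.trans
      ((min_le_right _ _).trans (half_le_self hδ.le)))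
  · exact h.continuous_map.comp (continuous_id.prodMk (continuous_nsmul _))
  · have h_bad : {p | δ < dist p (h.map ((A.trans h).angle p, (q * N) • (A.trans h).angle p))} ⊆
        (A.trans h).symm.map ⁻¹' {w | ‖w.2 - (q * N) • w.1‖ ≤ ε} := fun p hp => by
      by_contra h_far
      have h_curve := (dist_squeeze_curve_le hθ hper ha h_le h_near (not_le.1 h_far)).trans
        (max_le h_inv le_rfl)
      have h_image := h_unif (h_curve.trans_lt ((min_le_left _ _).trans_lt (half_lt_self hη)))
      rw [← map_trans, map_map_symm] at h_image
      exact lt_asymm hp h_image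
    refine (measure_mono h_bad).trans ?_
    rw [(A.trans h).symm.measurePreserving_map.measure_preimage
      (measurableSet_le (by fun_prop) measurable_const).nullMeasurableSet]
    refine (volume_norm_sub_nsmul_le _ ε).trans (ENNReal.ofReal_le_ofReal ?_)
    linarith [min_le_right (η / 2) (δ / 2)]

end TorusDiffeo

/-! ### Conjugating a periodic flow by a large shear -/

namespace TorusDiffeo

section Lipschitz

variable (h : TorusDiffeo) {K₁ K₂ : ℝ}

lemma map_flow_torusProj (β : ℝ) (z : ℝ × ℝ) :
    (h.flow β).map (torusProj (h z)) = torusProj (h (z + (β, 0))) := by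
  rw [← isLiftOf_map, flow_apply, symm_apply_apply]

lemma dist_map_flow_le (hK : ∀ z w, dist (h z) (h w) ≤ K₁ * |z.1 - w.1| + K₂ * |z.2 - w.2|)
    (s t : ℝ) (p : Torus2) : dist ((h.flow s).map p) ((h.flow t).map p) ≤ K₁ * |s - t| := by
  obtain ⟨z, rfl⟩ := surjective_torusProj p
  rw [← isLiftOf_map, ← isLiftOf_map, flow_apply, flow_apply]
  refine (dist_torusProj_le _ _).trans ((hK _ _).trans_eq ?_)
  simp

lemma exists_mem_range_abs_div_sub_le {N : ℕ} (hN : 0 < N) {x : ℝ} (hx : x ∈ Icc (0 : ℝ) 1) :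
    ∃ i ∈ Finset.range (N + 1), |i / N - x| ≤ 1 / N := by
  have hN' : (0 : ℝ) < N := Nat.cast_pos.2 hN
  refine ⟨⌊N * x⌋₊, Finset.mem_range_succ_iff.2 (Nat.floor_le_of_le ?_), ?_⟩
  · exact mul_le_of_le_one_right hN'.le hx.2
  · have h_eq : (⌊N * x⌋₊ : ℝ) / N - x = (⌊N * x⌋₊ - N * x) / N := by field_simp
    rw [h_eq, abs_div, Nat.abs_cast]
    gcongr
    exact Nat.abs_floor_sub_le (mul_nonneg hN'.le hx.1)

lemma exists_finset_dist_map_flow_le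
    (hK : ∀ z w, dist (h z) (h w) ≤ K₁ * |z.1 - w.1| + K₂ * |z.2 - w.2|) (hK₁ : 0 ≤ K₁)
    (hK₂ : 0 ≤ K₂) {N₁ N₂ : ℕ} (hN₁ : 0 < N₁) (hN₂ : 0 < N₂) :
    ∃ Z : Finset Torus2, Z.card ≤ (N₁ + 1) * (N₂ + 1) ∧ ∀ p, ∃ z ∈ Z, ∀ β,
      dist ((h.flow β).map z) ((h.flow β).map p) ≤ K₁ / N₁ + K₂ / N₂ := by
  classical
  let gridPoint (i : ℕ × ℕ) : ℝ × ℝ := (i.1 / N₁, i.2 / N₂)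
  refine ⟨(Finset.range (N₁ + 1) ×ˢ Finset.range (N₂ + 1)).image
    fun i => torusProj (h (gridPoint i)), Finset.card_image_le.trans (by simp), fun p => ?_⟩
  obtain ⟨z, rfl⟩ := surjective_torusProj p
  obtain ⟨w, hw, k, hk⟩ := exists_mem_Icc_add_intVec (h.symm z)
  have h_rep : torusProj z = torusProj (h w) := by
    rw [← torusProj_add_intVec (h w) k, ← h.isEquivariant, ← hk, apply_symm_apply]
  obtain ⟨i, hi, hi_dist⟩ := exists_mem_range_abs_div_sub_le hN₁ ⟨hw.1.1, hw.2.1⟩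
  obtain ⟨j, hj, hj_dist⟩ := exists_mem_range_abs_div_sub_le hN₂ ⟨hw.1.2, hw.2.2⟩
  refine ⟨_, Finset.mem_image_of_mem _ (Finset.mk_mem_product hi hj), fun β => ?_⟩
  rw [h_rep, map_flow_torusProj, map_flow_torusProj]
  refine (dist_torusProj_le _ _).trans ((hK _ _).trans ?_)
  simp only [gridPoint, Prod.fst_add, Prod.snd_add, add_sub_add_right_eq_sub]
  rw [div_eq_mul_one_div K₁, div_eq_mul_one_div K₂]
  gcongr

lemma exists_lt_dist_map_flow_le
    (hK : ∀ z w, dist (h z) (h w) ≤ K₁ * |z.1 - w.1| + K₂ * |z.2 - w.2|) (hK₁ : 0 ≤ K₁) {q m : ℕ}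
    (hq : 0 < q) (hm : 0 < m) {α : ℝ} {k : ℤ} (hk : q * α = k) {t : ℝ} (ht : t ∈ Ico 0 1) :
    ∃ i < m, ∀ p, dist ((h.flow (α + 1 / m)).map^[i] p) ((h.flow t).map p) ≤ K₁ * (q / m) := by
  have hq' : (0 : ℝ) < q := Nat.cast_pos.2 hq
  have hm' : (0 : ℝ) < m := Nat.cast_pos.2 hm
  have h_nonneg : 0 ≤ t * m / q := div_nonneg (mul_nonneg ht.1 hm'.le) hq'.le
  set l := ⌊t * m / q⌋₊
  have h_floor : q * (l : ℝ) ≤ t * m := by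
    rw [mul_comm, ← le_div_iff₀ hq']
    exact Nat.floor_le h_nonneg
  have h_lt_floor : t * m < q * (l + 1 : ℝ) := by
    rw [mul_comm (q : ℝ), ← div_lt_iff₀ hq']
    exact Nat.lt_floor_add_one _
  refine ⟨q * l, ?_, fun p => ?_⟩
  · have h_lt : ((q * l : ℕ) : ℝ) < m := by
      push_cast
      exact h_floor.trans_lt (mul_lt_of_lt_one_left hm' ht.2)
    exact_mod_cast h_lt
  · have h_time : ((q * l : ℕ) : ℝ) * (α + 1 / m) = q * l / m + (l * k : ℤ) := by
      push_cast
      rw [← hk]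
      ring
    rw [iterate_map_flow, h_time, map_flow_add_intCast]
    refine (h.dist_map_flow_le hK _ _ p).trans (mul_le_mul_of_nonneg_left ?_ hK₁)
    rw [abs_le]
    constructor
    · rw [neg_le_sub_iff_le_add, ← add_div, le_div_iff₀ hm']
      linarith
    · exact (sub_nonpos.2 ((div_le_iff₀ hm').2 h_floor)).trans (by positivity)

end Lipschitz

/-- The shear `(x, y) ↦ (x, y + S cos (2πqx))`. -/
def cosShear (q : ℕ) (S : ℝ) : TorusDiffeo :=
  shear (φ := fun x => S * Real.cos (2 * Real.pi * q * x)) (by fun_prop) fun x => by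
    have h_arg : 2 * Real.pi * q * (x + 1) = 2 * Real.pi * q * x + q * (2 * Real.pi) := by ring
    simp only [h_arg, Real.cos_add_nat_mul_two_pi]

lemma cosShear_apply (q : ℕ) (S : ℝ) (z : ℝ × ℝ) :
    cosShear q S z = (z.1, z.2 + S * Real.cos (2 * Real.pi * q * z.1)) := rfl

lemma cosShear_symm_apply (q : ℕ) (S : ℝ) (z : ℝ × ℝ) :
    (cosShear q S).symm z = (z.1, z.2 - S * Real.cos (2 * Real.pi * q * z.1)) := rfl

lemma abs_cos_sub_cos_le (x y : ℝ) : |Real.cos x - Real.cos y| ≤ |x - y| := by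
  simpa [Real.dist_eq] using Real.lipschitzWith_cos.dist_le_mul x y

lemma angle_cosShear_trans (q : ℕ) (S : ℝ) (P : TorusDiffeo) :
    ((cosShear q S).trans P).angle = P.angle := by
  funext p
  obtain ⟨z, rfl⟩ := surjective_torusProj p
  rw [angle, angle, ← isLiftOf_map, ← isLiftOf_map]
  rfl

lemma dist_cosShear_trans_le {P : TorusDiffeo} {K : ℝ≥0} (hP : LipschitzWith K P) (q : ℕ) {S : ℝ}
    (hS : 0 ≤ S) (z w : ℝ × ℝ) : dist ((cosShear q S).trans P z) ((cosShear q S).trans P w) ≤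
      K * (1 + 2 * Real.pi * q * S) * |z.1 - w.1| + K * |z.2 - w.2| := by
  have h_cos : |S * Real.cos (2 * Real.pi * q * z.1) - S * Real.cos (2 * Real.pi * q * w.1)| ≤
      2 * Real.pi * q * S * |z.1 - w.1| := by
    rw [← mul_sub, abs_mul, abs_of_nonneg hS]
    refine (mul_le_mul_of_nonneg_left (abs_cos_sub_cos_le _ _) hS).trans_eq ?_
    rw [← mul_sub, abs_mul, abs_of_nonneg (by positivity)]
    ring
  have h_shear : dist (cosShear q S z) (cosShear q S w) ≤
      (1 + 2 * Real.pi * q * S) * |z.1 - w.1| + |z.2 - w.2| := by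
    rw [cosShear_apply, cosShear_apply, Prod.dist_eq, Real.dist_eq, Real.dist_eq]
    refine max_le ?_ ?_
    · nlinarith [abs_nonneg (z.1 - w.1), abs_nonneg (z.2 - w.2),
        (abs_nonneg _).trans h_cos]
    · rw [add_sub_add_comm]
      linarith [abs_add_le (z.2 - w.2) (S * Real.cos (2 * Real.pi * q * z.1) -
        S * Real.cos (2 * Real.pi * q * w.1)), abs_nonneg (z.1 - w.1)]
  calc dist (P (cosShear q S z)) (P (cosShear q S w))
      ≤ K * dist (cosShear q S z) (cosShear q S w) := hP.dist_le_mul _ _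
    _ ≤ K * ((1 + 2 * Real.pi * q * S) * |z.1 - w.1| + |z.2 - w.2|) := by gcongr
    _ = _ := by ring

/-- Trigonometric vector fields of frequency `q`, parametrised linearly by their coefficients. The
displacement of a shear-conjugated translation is of this form, which gives all its derivative
estimates from the smallness of three numbers. -/
def trigField (q : ℕ) (c : ℝ × ℝ × ℝ) (z : ℝ × ℝ) : ℝ × ℝ :=
  (c.1, c.2.1 * Real.cos (2 * Real.pi * q * z.1) + c.2.2 * Real.sin (2 * Real.pi * q * z.1))

/-- The coefficients of the displacement of the translation by `(t, 0)` conjugated by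
`cosShear q S`. -/
def shearCoeff (q : ℕ) (S t : ℝ) : ℝ × ℝ × ℝ :=
  (t, S * (Real.cos (2 * Real.pi * q * t) - 1), -(S * Real.sin (2 * Real.pi * q * t)))

lemma trigField_periodic (q : ℕ) (c : ℝ × ℝ × ℝ) (k : ℤ × ℤ) :
    Function.Periodic (trigField q c) (intVec k) := fun z => by
  have h_arg : 2 * Real.pi * q * (z.1 + k.1) =
      2 * Real.pi * q * z.1 + (q * k.1 : ℤ) * (2 * Real.pi) := by
    push_cast
    ring
  simp only [trigField, intVec, Prod.fst_add, h_arg, Real.cos_add_int_mul_two_pi,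
    Real.sin_add_int_mul_two_pi]

lemma norm_trigField_le (q : ℕ) (c : ℝ × ℝ × ℝ) (z : ℝ × ℝ) : ‖trigField q c z‖ ≤ 2 * ‖c‖ := by
  have h_mul {a u : ℝ} (hu : |u| ≤ 1) (ha : ‖a‖ ≤ ‖c‖) : |a * u| ≤ ‖c‖ := by
    rw [abs_mul]
    exact (mul_le_of_le_one_right (abs_nonneg a) hu).trans ha
  have h_cos := h_mul (Real.abs_cos_le_one (2 * Real.pi * q * z.1))
    ((norm_fst_le c.2).trans (norm_snd_le c))
  have h_sin := h_mul (Real.abs_sin_le_one (2 * Real.pi * q * z.1))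
    ((norm_snd_le c.2).trans (norm_snd_le c))
  refine norm_prod_le_iff.2 ⟨?_, ?_⟩
  · exact (norm_fst_le c).trans (le_mul_of_one_le_left (norm_nonneg c) one_le_two)
  · exact (abs_add_le _ _).trans ((add_le_add h_cos h_sin).trans_eq (two_mul _).symm)

lemma norm_shearCoeff_le (q : ℕ) {S : ℝ} (hS : 1 ≤ S) (t : ℝ) :
    ‖shearCoeff q S t‖ ≤ (1 + 2 * Real.pi * q) * (S * |t|) := by
  have h_nonneg : 0 ≤ S * |t| := by positivity
  have h_abs : |2 * Real.pi * q * t| = 2 * Real.pi * q * |t| := by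
    rw [abs_mul, abs_of_nonneg (by positivity)]
  have h_mul {u : ℝ} (hu : |u| ≤ |2 * Real.pi * q * t|) :
      ‖S * u‖ ≤ (1 + 2 * Real.pi * q) * (S * |t|) := by
    rw [Real.norm_eq_abs, abs_mul, abs_of_nonneg (zero_le_one.trans hS)]
    calc S * |u| ≤ S * (2 * Real.pi * q * |t|) := by
          rw [← h_abs]
          gcongr
      _ ≤ _ := by linarith
  refine norm_prod_le_iff.2 ⟨?_, norm_prod_le_iff.2 ⟨h_mul ?_, ?_⟩⟩
  · calc |t| ≤ S * |t| := le_mul_of_one_le_left (abs_nonneg t) hS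
      _ ≤ _ := le_mul_of_one_le_left h_nonneg (by linarith [show 0 ≤ 2 * Real.pi * q by positivity])
  · simpa using abs_cos_sub_cos_le (2 * Real.pi * q * t) 0
  · rw [shearCoeff, norm_neg]
    exact h_mul Real.abs_sin_le_abs

lemma flow_cosShear_trans (P : TorusDiffeo) {q : ℕ} {α : ℝ} {k : ℤ} (hk : q * α = k) (S t : ℝ)
    (z : ℝ × ℝ) : ((cosShear q S).trans P).flow (α + t) z =
      P (P.symm z + trigField q (shearCoeff q S t) (P.symm z) + (α, 0)) := by
  set w := P.symm z
  change P (cosShear q S ((cosShear q S).symm w + (α + t, 0))) = _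
  have h_cos : Real.cos (2 * Real.pi * q * (w.1 + (α + t))) =
      Real.cos (2 * Real.pi * q * w.1) * Real.cos (2 * Real.pi * q * t) -
        Real.sin (2 * Real.pi * q * w.1) * Real.sin (2 * Real.pi * q * t) := by
    have h_arg : 2 * Real.pi * q * (w.1 + (α + t)) =
        2 * Real.pi * q * w.1 + 2 * Real.pi * q * t + k * (2 * Real.pi) := by
      rw [← hk]
      ring
    rw [h_arg, Real.cos_add_int_mul_two_pi, Real.cos_add]
  congr 1
  ext
  · simp only [cosShear_apply, cosShear_symm_apply, trigField, shearCoeff, Prod.fst_add]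
    ring
  · simp only [cosShear_apply, cosShear_symm_apply, trigField, shearCoeff, Prod.fst_add,
      Prod.snd_add, h_cos]
    ring

lemma exists_forall_norm_iteratedFDeriv_flow_sub_le (P : TorusDiffeo) {q : ℕ} {α : ℝ} {k : ℤ}
    (hk : q * α = k) (n : ℕ) {η : ℝ} (hη : 0 < η) :
    ∃ κ > 0, ∀ S t : ℝ, 1 ≤ S → S * |t| ≤ κ → ∀ j ≤ n, ∀ z, ‖iteratedFDeriv ℝ j
      (fun z => ((cosShear q S).trans P).flow (α + t) z - P.flow α z) z‖ ≤ η := by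
  have hP := P.contDiff
  have hP' := P.symm.contDiff
  have h_small := eventually_norm_iteratedFDeriv_le_of_periodic (c₀ := (0 : ℝ × ℝ × ℝ))
    (f := fun c z => P (P.symm z + trigField q c (P.symm z) + (α, 0)) - P.flow α z)
    (by simp only [Function.uncurry_def, trigField, flow_apply]; fun_prop) (fun c k z => ?_)
    (by funext z; simp [trigField, flow_apply, ← Prod.zero_eq_mk]) n hη
  · obtain ⟨κ, hκ, h_ball⟩ := Metric.eventually_nhds_iff.1 h_small
    refine ⟨κ / (2 * (1 + 2 * Real.pi * q)), by positivity, fun S t hS hSt => ?_⟩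
    simp only [flow_cosShear_trans P hk]
    refine h_ball ?_
    rw [dist_zero_right]
    calc ‖shearCoeff q S t‖ ≤ (1 + 2 * Real.pi * q) * (S * |t|) := norm_shearCoeff_le q hS t
      _ ≤ (1 + 2 * Real.pi * q) * (κ / (2 * (1 + 2 * Real.pi * q))) := by gcongr
      _ = κ / 2 := by field_simp
      _ < κ := half_lt_self hκ
  · beta_reduce
    rw [P.symm.isEquivariant, trigField_periodic, (P.flow α).isEquivariant,
      add_right_comm _ (intVec k), add_right_comm _ (intVec k), P.isEquivariant,
      add_sub_add_right_eq_sub]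

lemma exists_forall_dist_map_flow_le (P : TorusDiffeo) (q : ℕ) {η : ℝ} (hη : 0 < η) :
    ∃ κ > 0, ∀ S t : ℝ, 1 ≤ S → S * |t| ≤ κ → ∀ (α : ℝ) (k : ℤ), q * α = k → ∀ p,
      dist ((((cosShear q S).trans P).flow (α + t)).map p) ((P.flow α).map p) ≤ η := by
  obtain ⟨K, hK, h_lip⟩ := P.isEquivariant.exists_lipschitzWith (P.contDiff.of_le (by simp))
  refine ⟨η / (K * (2 * (1 + 2 * Real.pi * q))), by positivity, fun S t hS hSt α k hk p => ?_⟩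
  obtain ⟨z, rfl⟩ := surjective_torusProj p
  rw [← isLiftOf_map, ← isLiftOf_map, flow_cosShear_trans P hk, flow_apply]
  set w := P.symm z
  calc dist (torusProj (P (w + trigField q (shearCoeff q S t) w + (α, 0))))
        (torusProj (P (w + (α, 0))))
      ≤ K * dist (w + trigField q (shearCoeff q S t) w + (α, 0)) (w + (α, 0)) :=
        (dist_torusProj_le _ _).trans (h_lip.dist_le_mul _ _)
    _ = K * ‖trigField q (shearCoeff q S t) w‖ := by
        rw [dist_add_right, dist_eq_norm, add_sub_cancel_left]
    _ ≤ K * (2 * ((1 + 2 * Real.pi * q) * (S * |t|))) := by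
        gcongr
        exact (norm_trigField_le q _ w).trans (by gcongr; exact norm_shearCoeff_le q hS t)
    _ ≤ K * (2 * ((1 + 2 * Real.pi * q) * (η / (K * (2 * (1 + 2 * Real.pi * q)))))) := by gcongr
    _ = η := by field_simp

lemma exists_finset_dist_map_flow_cosShear_le (P : TorusDiffeo) (q : ℕ) {η : ℝ} (hη : 0 < η) :
    ∃ C : ℝ, ∀ S : ℕ, 1 ≤ S → ∃ Z : Finset Torus2, Z.card ≤ C * S ∧ ∀ p, ∃ z ∈ Z, ∀ β,
      dist ((((cosShear q S).trans P).flow β).map z)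
        ((((cosShear q S).trans P).flow β).map p) ≤ η := by
  obtain ⟨K, hK, h_lip⟩ := P.isEquivariant.exists_lipschitzWith (P.contDiff.of_le (by simp))
  obtain ⟨N, hN⟩ := exists_nat_gt (K * (2 + 2 * Real.pi * q) / η)
  have hN_pos : (0 : ℝ) < N := lt_of_le_of_lt (by positivity) hN
  refine ⟨(N + 1) ^ 2, fun S hS => ?_⟩
  have hS' : (1 : ℝ) ≤ S := Nat.one_le_cast.2 hS
  obtain ⟨Z, hZ_card, hZ⟩ := ((cosShear q S).trans P).exists_finset_dist_map_flow_le
    (dist_cosShear_trans_le h_lip q S.cast_nonneg) (by positivity) K.coe_nonneg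
    (N₁ := N * S) (N₂ := N) (by exact_mod_cast mul_pos hN_pos (zero_lt_one.trans_le hS'))
    (by exact_mod_cast hN_pos)
  refine ⟨Z, ?_, fun p => ?_⟩
  · calc (Z.card : ℝ) ≤ (N * S + 1) * (N + 1) := by exact_mod_cast hZ_card
      _ ≤ (N * S + S) * (N + 1) := by gcongr
      _ = (N + 1) ^ 2 * S := by ring
  · obtain ⟨z, hz, h_dist⟩ := hZ p
    refine ⟨z, hz, fun β => (h_dist β).trans ?_⟩
    push_cast
    calc K * (1 + 2 * Real.pi * q * S) / (N * S) + K / N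
        ≤ K * (S + 2 * Real.pi * q * S) / (N * S) + K / N := by gcongr
      _ = K * (2 + 2 * Real.pi * q) / N := by field_simp; ring
      _ ≤ η := ((div_lt_comm₀ (by positivity) (by positivity)).1 hN).le

lemma dist_cosShear_horizontal (q : ℕ) (S x y t : ℝ) :
    dist (cosShear q S (x + (t - (x + y) / 2), 0)) (cosShear q S (y + (t - (x + y) / 2), 0)) =
      max |y - x| |2 * S * Real.sin (2 * Real.pi * q * t) * Real.sin (Real.pi * q * (y - x))| := by
  rw [cosShear_apply, cosShear_apply, dist_comm, Prod.dist_eq, Real.dist_eq, Real.dist_eq]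
  simp only [zero_add, add_sub_add_right_eq_sub]
  rw [← mul_sub, Real.cos_sub_cos, ← abs_neg (S * _)]
  ring_nf

lemma le_dist_cosShear_horizontal {q : ℕ} (hq : 0 < q) {S x y : ℝ} (hS : 0 ≤ S) (hxy : x ≤ y)
    (hqxy : q * (y - x) ≤ 1 / 2) :
    S * (y - x) ≤ dist (cosShear q S (x + (1 / (4 * q) - (x + y) / 2), 0))
      (cosShear q S (y + (1 / (4 * q) - (x + y) / 2), 0)) := by
  have hq' : (1 : ℝ) ≤ q := Nat.one_le_cast.2 hq
  have := sub_nonneg.2 hxy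
  have h_top : 2 * Real.pi * q * (1 / (4 * q)) = Real.pi / 2 := by field_simp; norm_num
  have h_sin : 2 * (q * (y - x)) ≤ Real.sin (Real.pi * (q * (y - x))) := by
    have h_jordan := Real.mul_le_sin (x := Real.pi * (q * (y - x))) (by positivity)
      (by nlinarith [Real.pi_pos])
    rwa [← mul_assoc, div_mul_cancel₀ _ Real.pi_pos.ne'] at h_jordan
  rw [dist_cosShear_horizontal, h_top, Real.sin_pi_div_two, mul_one, mul_assoc Real.pi]
  refine le_trans ?_ ((le_abs_self _).trans (le_max_right _ _))
  rw [mul_comm 2 S, mul_assoc]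
  exact mul_le_mul_of_nonneg_left (by nlinarith) hS

lemma exists_dist_cosShear_eq {P : TorusDiffeo} {K : ℝ≥0} (hK : LipschitzWith K P) {C : ℝ}
    (hC : ∀ z, dist (P z) z ≤ C) {q : ℕ} (hq : 0 < q) {S x y r : ℝ} (hS : 0 ≤ S) (hxy : x ≤ y)
    (hqxy : q * (y - x) ≤ 1 / 2) (hr : K * (y - x) ≤ r) (hr' : r + 2 * C ≤ S * (y - x)) :
    ∃ t, dist (P (cosShear q S (x + t, 0))) (P (cosShear q S (y + t, 0))) = r := by
  set f : ℝ → ℝ := fun t => dist (P (cosShear q S (x + t, 0))) (P (cosShear q S (y + t, 0)))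
  have hf : Continuous f := by
    have hP := P.contDiff.continuous
    have hA := (cosShear q S).contDiff.continuous
    fun_prop
  have h_near : f (0 - (x + y) / 2) ≤ r := by
    refine (hK.dist_le_mul _ _).trans (le_trans (le_of_eq ?_) hr)
    rw [dist_cosShear_horizontal]
    simp [abs_of_nonneg (sub_nonneg.2 hxy), hxy]
  have h_far : r ≤ f (1 / (4 * q) - (x + y) / 2) := by
    have h_apart := le_dist_cosShear_horizontal hq hS hxy hqxy
    have h_tri := dist_triangle4_left (P (cosShear q S (x + (1 / (4 * q) - (x + y) / 2), 0)))
      (P (cosShear q S (y + (1 / (4 * q) - (x + y) / 2), 0)))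
      (cosShear q S (x + (1 / (4 * q) - (x + y) / 2), 0))
      (cosShear q S (y + (1 / (4 * q) - (x + y) / 2), 0))
    linarith [hC (cosShear q S (x + (1 / (4 * q) - (x + y) / 2), 0)),
      hC (cosShear q S (y + (1 / (4 * q) - (x + y) / 2), 0))]
  obtain ⟨t, -, ht⟩ := intermediate_value_uIcc hf.continuousOn (mem_uIcc.2 (Or.inl ⟨h_near, h_far⟩))
  exact ⟨t, ht⟩

lemma exists_le_dist_iterate_flow_cosShear {P : TorusDiffeo} {K : ℝ≥0} (hK : LipschitzWith K P)
    {C : ℝ} (hC : ∀ z, dist (P z) z ≤ C) {q : ℕ} (hq : 0 < q) {α : ℝ} {k : ℤ} (hk : q * α = k)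
    {S x y r : ℝ} (hS : 0 ≤ S) (hxy : x ≤ y) (hqxy : q * (y - x) ≤ 1 / 2) (hr : K * (y - x) ≤ r)
    (hr' : r + 2 * C ≤ S * (y - x)) (hr_half : r ≤ 1 / 2) {m : ℕ} (hm : 0 < m) :
    ∃ i < m, r - 2 * (K * (1 + 2 * Real.pi * q * S) * (q / m)) ≤
      dist ((((cosShear q S).trans P).flow (α + 1 / m)).map^[i]
          (torusProj ((cosShear q S).trans P (x, 0))))
        ((((cosShear q S).trans P).flow (α + 1 / m)).map^[i]
          (torusProj ((cosShear q S).trans P (y, 0)))) := by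
  set H := (cosShear q S).trans P
  obtain ⟨t, ht⟩ := exists_dist_cosShear_eq hK hC hq hS hxy hqxy hr hr'
  have h_dist : dist ((H.flow (Int.fract t)).map (torusProj (H (x, 0))))
      ((H.flow (Int.fract t)).map (torusProj (H (y, 0)))) = r := by
    rw [← map_flow_add_intCast, Int.fract_add_floor, map_flow_torusProj, map_flow_torusProj,
      Prod.mk_add_mk, Prod.mk_add_mk, add_zero]
    exact (dist_torusProj_eq (ht.trans_le hr_half)).trans ht
  obtain ⟨i, hi, h_close⟩ := H.exists_lt_dist_map_flow_le (dist_cosShear_trans_le hK q hS)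
    (by positivity) hq hm hk ⟨Int.fract_nonneg t, Int.fract_lt_one t⟩
  refine ⟨i, hi, ?_⟩
  have h_tri := dist_triangle4_left
    ((H.flow (α + 1 / m)).map^[i] (torusProj (H (x, 0))))
    ((H.flow (α + 1 / m)).map^[i] (torusProj (H (y, 0))))
    ((H.flow (Int.fract t)).map (torusProj (H (x, 0))))
    ((H.flow (Int.fract t)).map (torusProj (H (y, 0))))
  linarith [h_close (torusProj (H (x, 0))), h_close (torusProj (H (y, 0)))]

lemma natCast_mul_sub_mem_Icc {d ρ : ℝ} (hd : 0 < d) {i j : ℕ} (hij : i < j)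
    (hj : j < ⌊ρ / d⌋₊) : j * d - i * d ∈ Icc d ρ := by
  have h_step : (i : ℝ) + 1 ≤ j := by exact_mod_cast hij
  have h_floor : j * d ≤ ρ := (le_div_iff₀ hd).1 (Nat.lt_of_lt_floor hj).le
  exact ⟨by nlinarith, (sub_le_self _ (by positivity)).trans h_floor⟩

lemma exists_pairwise_le_dist_iterate_flow_cosShear (P : TorusDiffeo) {q : ℕ} (hq : 0 < q) :
    ∃ c > 0, ∃ C > 0, ∀ (S : ℝ) (m : ℕ), 1 ≤ S → C * S ≤ m → ∀ (α : ℝ) (k : ℤ), q * α = k →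
      ∃ f : Fin ⌊c * S⌋₊ → Torus2, Pairwise fun j j' => ∃ i < m, 3 / 16 ≤
        dist ((((cosShear q S).trans P).flow (α + 1 / m)).map^[i] (f j))
          ((((cosShear q S).trans P).flow (α + 1 / m)).map^[i] (f j')) := by
  obtain ⟨K, hK, h_lip⟩ := P.isEquivariant.exists_lipschitzWith (P.contDiff.of_le (by simp))
  obtain ⟨C, hC, h_disp⟩ := P.isEquivariant.exists_dist_self_le P.contDiff.continuous
  have : (0 : ℝ) < q := Nat.cast_pos.2 hq
  set ρ : ℝ := min (1 / (2 * q)) (1 / (4 * K))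
  have hρ : 0 < ρ := lt_min (by positivity) (by positivity)
  refine ⟨ρ / (2 * C + 1), by positivity, 32 * (K * (1 + 2 * Real.pi * q)) * q, by positivity,
    fun S m hS hm α k hk => ?_⟩
  have hS₀ : 0 < S := zero_lt_one.trans_le hS
  have hm₀ : (0 : ℝ) < m := lt_of_lt_of_le (by positivity) hm
  have h_error : 2 * (K * (1 + 2 * Real.pi * q * S) * (q / m)) ≤ 1 / 16 := by
    rw [← mul_div_assoc, ← mul_div_assoc, div_le_iff₀ hm₀]
    have : K * q * 1 ≤ K * q * S := by gcongr
    linarith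
  set d : ℝ := (2 * C + 1) / S
  have hd : 0 < d := by positivity
  have h_count : ρ / (2 * C + 1) * S = ρ / d := by
    simp only [d]
    field_simp
  have h_sep {j j' : ℕ} (hj : j < j') (hj' : j' < ⌊ρ / d⌋₊) : ∃ i < m, 3 / 16 ≤
      dist ((((cosShear q S).trans P).flow (α + 1 / m)).map^[i]
          (torusProj ((cosShear q S).trans P (j * d, 0))))
        ((((cosShear q S).trans P).flow (α + 1 / m)).map^[i]
          (torusProj ((cosShear q S).trans P (j' * d, 0)))) := by
    obtain ⟨h_lower, h_upper⟩ := natCast_mul_sub_mem_Icc hd hj hj'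
    have h_width := (le_min_iff.1 h_upper)
    obtain ⟨i, hi, h_dist⟩ := exists_le_dist_iterate_flow_cosShear h_lip h_disp hq hk hS₀.le
      (sub_nonneg.1 (hd.le.trans h_lower))
      (by linarith [(le_div_iff₀ (by positivity)).1 h_width.1])
      (r := 1 / 4) (by linarith [(le_div_iff₀ (by positivity)).1 h_width.2])
      (by linarith [(div_le_iff₀ hS₀).1 h_lower]) (by norm_num) (Nat.cast_pos.1 hm₀)
    exact ⟨i, hi, by linarith⟩
  rw [h_count]
  refine ⟨fun j => torusProj ((cosShear q S).trans P (j * d, 0)), fun j j' hj => ?_⟩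
  rcases lt_or_gt_of_ne hj with h_lt | h_lt
  · exact h_sep h_lt j'.2
  · obtain ⟨i, hi, h_dist⟩ := h_sep h_lt j.2
    exact ⟨i, hi, h_dist.trans_eq (dist_comm _ _)⟩

end TorusDiffeo

/-! ### The inductive step -/

/-- The conjugacy `P` precomposed with the shear of frequency `q` and amplitude `shearAmp L m`;
`L` is the logarithm of the orbit complexity to be produced at time `m`. -/
def shearedConj (L : ℕ → ℝ) (P : TorusDiffeo) (q m : ℕ) : TorusDiffeo :=
  (TorusDiffeo.cosShear q (shearAmp L m)).trans P

namespace IsSlowGrowth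

variable {L : ℕ → ℝ} (hL : IsSlowGrowth L) (P : TorusDiffeo) {q : ℕ}

include hL

lemma eventually_one_le_shearAmp : ∀ᶠ m in atTop, (1 : ℝ) ≤ shearAmp L m :=
  (hL.tendsto_shearAmp_atTop.eventually_ge_atTop 1).mono fun _ hm => Nat.one_le_cast.2 hm

lemma eventually_norm_iteratedFDeriv_flow_sub_le {α : ℝ} {k : ℤ} (hk : q * α = k) (n : ℕ) {η : ℝ}
    (hη : 0 < η) : ∀ᶠ m : ℕ in atTop, ∀ σ : ℝ, |σ| ≤ 1 → ∀ j ≤ n, ∀ z, ‖iteratedFDeriv ℝ j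
      (fun z => (shearedConj L P q m).flow (α + σ / m) z - P.flow α z) z‖ ≤ η := by
  obtain ⟨κ, hκ, h_close⟩ := P.exists_forall_norm_iteratedFDeriv_flow_sub_le hk n hη
  filter_upwards [hL.eventually_one_le_shearAmp, hL.tendsto_shearAmp_div.eventually_le_const hκ]
    with m hS h_le σ hσ
  refine h_close _ _ hS ?_
  calc shearAmp L m * |σ / m| = shearAmp L m / m * |σ| := by rw [abs_div, Nat.abs_cast]; ring
    _ ≤ shearAmp L m / m := mul_le_of_le_one_right (by positivity) hσ
    _ ≤ κ := h_le

lemma exists_eventually_dist_iterate_flow_le {α : ℝ} {k : ℤ} (hk : q * α = k) {η : ℝ}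
    (hη : 0 < η) : ∃ κ > 0, ∀ᶠ m : ℕ in atTop, ∀ i ≤ shadowTime L κ m, ∀ p,
      dist (((shearedConj L P q m).flow (α + 1 / m)).map^[i] p) ((P.flow α).map^[i] p) ≤ η := by
  obtain ⟨κ, hκ, h_close⟩ := P.exists_forall_dist_map_flow_le q hη
  refine ⟨κ, hκ, ?_⟩
  filter_upwards [hL.eventually_one_le_shearAmp, eventually_gt_atTop 0] with m hS hm i hi p
  rw [TorusDiffeo.iterate_map_flow, TorusDiffeo.iterate_map_flow, mul_add]
  have : (0 : ℝ) < m := Nat.cast_pos.2 hm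
  refine h_close _ _ hS ?_ _ (i * k) (by push_cast; rw [← hk]; ring) p
  calc shearAmp L m * |(i : ℝ) * (1 / m)| = shearAmp L m * (i * (1 / m)) := by
        rw [abs_of_nonneg (by positivity)]
    _ ≤ shearAmp L m * (κ * (m / shearAmp L m) * (1 / m)) := by
      gcongr
      exact (Nat.le_floor_iff (by positivity)).1 hi
    _ = κ := by field_simp

lemma eventually_exists_flow_cover (q : ℕ) {κ η : ℝ} (hκ : 0 < κ) (hη : 0 < η) :
    ∀ᶠ m in atTop, ∃ Z : Finset Torus2,
      (∀ p, ∃ z ∈ Z, ∀ β, dist (((shearedConj L P q m).flow β).map z)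
        (((shearedConj L P q m).flow β).map p) ≤ η) ∧
      ∀ k, shadowTime L κ m ≤ k → Z.card ≤ Real.exp ((1 + η) * L k) := by
  obtain ⟨C, h_cover⟩ := P.exists_finset_dist_map_flow_cosShear_le q hη
  filter_upwards [hL.tendsto_shearAmp_atTop.eventually_ge_atTop 1,
    hL.eventually_mul_shearAmp_le hκ C hη] with m hS h_card
  obtain ⟨Z, hZ_card, hZ⟩ := h_cover (shearAmp L m) hS
  exact ⟨Z, hZ, fun k hk => hZ_card.trans (h_card k hk)⟩

lemma eventually_exists_separated (hq : 0 < q) {α : ℝ} {k : ℤ} (hk : q * α = k) {η : ℝ}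
    (hη : 0 < η) : ∀ᶠ m : ℕ in atTop, ∃ (N : ℕ) (f : Fin N → Torus2),
      Real.exp ((1 - η) * L m) ≤ N ∧ Pairwise fun j j' => ∃ i < m, 3 / 16 ≤
        dist (((shearedConj L P q m).flow (α + 1 / m)).map^[i] (f j))
          (((shearedConj L P q m).flow (α + 1 / m)).map^[i] (f j')) := by
  obtain ⟨c, hc, C, hC, h_sep⟩ := P.exists_pairwise_le_dist_iterate_flow_cosShear hq
  filter_upwards [hL.eventually_one_le_shearAmp, eventually_gt_atTop 0,
    hL.tendsto_shearAmp_div.eventually_le_const (inv_pos.2 hC),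
    hL.eventually_exp_le_floor hc hη] with m hS hm h_div h_exp
  have hm' : (0 : ℝ) < m := Nat.cast_pos.2 hm
  have h_le : C * shearAmp L m ≤ m := by
    rwa [div_le_iff₀ hm', le_inv_mul_iff₀ hC] at h_div
  obtain ⟨f, hf⟩ := h_sep _ m hS h_le α k hk
  exact ⟨_, f, h_exp, hf⟩

end IsSlowGrowth

/-- A periodic approximation of the map under construction: the conjugate by `conj` of the
translation by `rot`, whose period divides `denom`. The fields `time` and `horizon` record the
orbit lengths up to which the approximation separates points and shadows the preceding one, and
`radius` is the room left for later changes of the angular coordinate `conj.angle`. -/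
structure Stage where
  conj : TorusDiffeo
  rot : ℝ
  denom : ℕ
  time : ℕ
  horizon : ℕ
  radius : ℝ
  denom_pos : 0 < denom
  exists_denom_mul_rot : ∃ k : ℤ, denom * rot = k
  time_pos : 0 < time
  radius_pos : 0 < radius

namespace Stage

/-- The periodic diffeomorphism attached to a stage. -/
def approx (s : Stage) : TorusDiffeo := s.conj.flow s.rot

/-- The relation between consecutive stages of the construction for the growth rate `L`, with
tolerance `ε` and control of `n` derivatives. -/
structure IsStep (L : ℕ → ℝ) (ε : ℝ) (n : ℕ) (s s' : Stage) : Prop where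
  rot_eq : s'.rot = s.rot + 1 / s'.time
  two_mul_time_le : 2 * s.time ≤ s'.time
  denom_le : s.denom ≤ ε * s'.time
  forward : ∀ j ≤ n, ∀ z, ‖iteratedFDeriv ℝ j (fun z => s'.approx z - s.approx z) z‖ ≤ ε
  backward : ∀ j ≤ n, ∀ z,
    ‖iteratedFDeriv ℝ j (fun z => s'.approx.symm z - s.approx.symm z) z‖ ≤ ε
  time_le_horizon : s.time ≤ s'.horizon
  horizon_lt : s.horizon < s'.horizon
  dist_iterate_le : ∀ i ≤ s'.horizon, ∀ p,
    dist (s'.approx.map^[i] p) (s.approx.map^[i] p) ≤ ε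
  exists_cover : ∃ Z : Finset Torus2,
    (∀ p, ∃ z ∈ Z, ∀ i, dist (s'.approx.map^[i] z) (s'.approx.map^[i] p) ≤ ε) ∧
    ∀ k, s'.horizon ≤ k → Z.card ≤ Real.exp ((1 + ε) * L k)
  exists_separated : ∃ (N : ℕ) (f : Fin N → Torus2), Real.exp ((1 - ε) * L s'.time) ≤ N ∧
    Pairwise fun j j' => ∃ i < s'.time,
      3 / 16 ≤ dist (s'.approx.map^[i] (f j)) (s'.approx.map^[i] (f j'))
  radius_le : s'.radius ≤ s.radius / 2
  dist_angle_le : ∀ p, dist (s'.conj.angle p) (s.conj.angle p) ≤ s.radius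
  exists_section : ∃ c : Torus1 → Torus2,
    volume {p | ε < dist p (c (s'.conj.angle p))} ≤ ENNReal.ofReal ε ∧
    ∀ x x', dist x x' ≤ 2 * s'.radius → dist (c x) (c x') ≤ ε

/-- The stage obtained from `s` by replacing the conjugacy by `shearedConj L P s.denom m` and the
rotation number by `s.rot + 1 / m`. -/
def next (s : Stage) (L : ℕ → ℝ) (P : TorusDiffeo) {m : ℕ} (hm : 0 < m) (M : ℕ) {r : ℝ}
    (hr : 0 < r) : Stage where
  conj := shearedConj L P s.denom m
  rot := s.rot + 1 / m
  denom := s.denom * m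
  time := m
  horizon := M
  radius := r
  denom_pos := mul_pos s.denom_pos hm
  exists_denom_mul_rot := by
    obtain ⟨k, hk⟩ := s.exists_denom_mul_rot
    have : (m : ℝ) ≠ 0 := by positivity
    refine ⟨k * m + s.denom, ?_⟩
    push_cast
    rw [← hk]
    field_simp
  time_pos := hm
  radius_pos := hr

lemma symm_approx_next (s : Stage) (L : ℕ → ℝ) (P : TorusDiffeo) {m : ℕ} (hm : 0 < m) (M : ℕ)
    {r : ℝ} (hr : 0 < r) : (s.next L P hm M hr).approx.symm =
      (shearedConj L P s.denom m).flow (-s.rot + -1 / m) := by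
  rw [approx, TorusDiffeo.symm_flow]
  simp only [next, neg_add, neg_div]

lemma angle_next (s : Stage) (L : ℕ → ℝ) (P : TorusDiffeo) {m : ℕ} (hm : 0 < m) (M : ℕ) {r : ℝ}
    (hr : 0 < r) : (s.next L P hm M hr).conj.angle = P.angle :=
  TorusDiffeo.angle_cosShear_trans _ _ P

lemma exists_conj_section (s : Stage) {ε : ℝ} (hε : 0 < ε) :
    ∃ P : TorusDiffeo, P.flow s.rot = s.approx ∧
      (∀ p, dist (P.angle p) (s.conj.angle p) ≤ s.radius) ∧
      ∃ r > 0, r ≤ s.radius / 2 ∧ ∃ c : Torus1 → Torus2,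
        volume {p | ε < dist p (c (P.angle p))} ≤ ENNReal.ofReal ε ∧
        ∀ x x', dist x x' ≤ 2 * r → dist (c x) (c x') ≤ ε := by
  obtain ⟨k, hk⟩ := s.exists_denom_mul_rot
  obtain ⟨P, h_flow, h_angle, c, hc, h_vol⟩ :=
    s.conj.exists_angle_section s.denom_pos.ne' (lt_min s.radius_pos hε)
  obtain ⟨ρ, hρ, h_mod⟩ := Metric.uniformContinuous_iff.1
    (CompactSpace.uniformContinuous_of_continuous hc) ε hε
  refine ⟨P, h_flow _ k hk, fun p => (h_angle p).trans (min_le_left _ _),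
    min (s.radius / 2) (ρ / 3), lt_min (half_pos s.radius_pos) (div_pos hρ three_pos),
    min_le_left _ _, c, (measure_mono fun p (hp : ε < _) => ?_).trans
      (h_vol.trans (ENNReal.ofReal_le_ofReal (min_le_right _ _))),
    fun x x' hx => (h_mod (hx.trans_lt ?_)).le⟩
  · exact (min_le_right s.radius ε).trans_lt hp
  · linarith [min_le_right (s.radius / 2) (ρ / 3)]

lemma exists_isStep (s : Stage) {L : ℕ → ℝ} (hL : IsSlowGrowth L) {ε : ℝ} (hε : 0 < ε) (n : ℕ) :
    ∃ s', IsStep L ε n s s' := by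
  obtain ⟨P, h_flow, h_angle, r, hr, hr_le, c, h_vol, h_mod⟩ := s.exists_conj_section hε
  obtain ⟨k, hk⟩ := s.exists_denom_mul_rot
  have hk' : s.denom * -s.rot = (-k : ℤ) := by push_cast; rw [← hk]; ring
  obtain ⟨κ, hκ, h_shadow⟩ := hL.exists_eventually_dist_iterate_flow_le P hk hε
  have h_forward := hL.eventually_norm_iteratedFDeriv_flow_sub_le P hk n hε
  have h_backward := hL.eventually_norm_iteratedFDeriv_flow_sub_le P hk' n hε
  have h_horizon := hL.tendsto_shadowTime_atTop hκ
  have h_time : Tendsto (fun m : ℕ => ε * m) atTop atTop :=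
    tendsto_natCast_atTop_atTop.const_mul_atTop hε
  rw [h_flow] at h_shadow
  rw [h_flow] at h_forward
  rw [← TorusDiffeo.symm_flow, h_flow] at h_backward
  obtain ⟨m, h_fwd, h_bwd, h_dist, ⟨Z, hZ, hZ_card⟩, h_sep, h_time_le, h_horizon_lt, h_two_mul,
      h_denom_le, hm⟩ :=
    (h_forward.and <| h_backward.and <| h_shadow.and <|
      (hL.eventually_exists_flow_cover P s.denom hκ hε).and <|
      (hL.eventually_exists_separated P s.denom_pos hk hε).and <|
      (h_horizon.eventually_ge_atTop s.time).and <|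
      (h_horizon.eventually_gt_atTop s.horizon).and <| (eventually_ge_atTop (2 * s.time)).and <|
      (h_time.eventually_ge_atTop (s.denom : ℝ)).and <| eventually_gt_atTop 0).exists
  refine ⟨s.next L P hm (shadowTime L κ m) hr, rfl, h_two_mul, h_denom_le, h_fwd 1 (by simp),
    s.symm_approx_next L P hm _ hr ▸ h_bwd (-1) (by simp), h_time_le, h_horizon_lt, h_dist,
    ⟨Z, ?_, hZ_card⟩, h_sep, hr_le, ?_, c, ?_, h_mod⟩
  · simpa only [approx, TorusDiffeo.iterate_map_flow] using
      fun p => (hZ p).imp fun z hz => ⟨hz.1, fun i : ℕ => hz.2 _⟩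
  · rwa [angle_next]
  · rwa [angle_next]

/-- The initial stage, whose approximation is the identity. -/
def initial : Stage where
  conj := TorusDiffeo.translation 0
  rot := 0
  denom := 1
  time := 1
  horizon := 0
  radius := 1
  denom_pos := one_pos
  exists_denom_mul_rot := ⟨0, by simp⟩
  time_pos := one_pos
  radius_pos := one_pos

lemma exists_forall_isStep {L : ℕ → ℝ} (hL : IsSlowGrowth L) {ε : ℕ → ℝ} (hε : ∀ n, 0 < ε n) :
    ∃ s : ℕ → Stage, ∀ n, IsStep L (ε n) n (s n) (s (n + 1)) := by
  choose next h_next using fun (n : ℕ) (s : Stage) => s.exists_isStep hL (hε n) n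
  exact ⟨Nat.rec initial next, fun n => h_next n _⟩

end Stage

/-! ### Limits of sequences with summable increments -/

section Metric

variable {X : Type*} [PseudoMetricSpace X] {u : ℕ → X} {a : X} {r : ℕ → ℝ}

lemma le_div_two_pow_of_le_half (hr : ∀ n, r (n + 1) ≤ r n / 2) (n k : ℕ) :
    r (n + k) ≤ r n / 2 ^ k := by
  induction k with
  | zero => simp
  | succ k ih =>
    calc r (n + (k + 1)) ≤ r (n + k) / 2 := hr (n + k)
      _ ≤ r n / 2 ^ k / 2 := by gcongr
      _ = r n / 2 ^ (k + 1) := by rw [pow_succ, div_div]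

lemma tendsto_zero_of_le_half (h_nonneg : ∀ n, 0 ≤ r n) (hr : ∀ n, r (n + 1) ≤ r n / 2) :
    Tendsto r atTop (𝓝 0) := by
  refine squeeze_zero h_nonneg (fun k => by simpa using le_div_two_pow_of_le_half hr 0 k) ?_
  exact tendsto_const_nhds.div_atTop (tendsto_pow_atTop_atTop_of_one_lt one_lt_two)

lemma dist_le_two_mul_of_tendsto (hr : ∀ n, r (n + 1) ≤ r n / 2) {n : ℕ}
    (hu : ∀ k ≥ n, dist (u k) (u (k + 1)) ≤ r k) (ha : Tendsto u atTop (𝓝 a)) :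
    dist (u n) a ≤ 2 * r n := by
  have h_shift : Tendsto (fun k => u (n + k)) atTop (𝓝 a) :=
    ha.comp ((tendsto_add_atTop_nat n).congr fun k => add_comm k n)
  refine dist_le_of_le_geometric_two_of_tendsto₀ (f := fun k => u (n + k)) (fun k => ?_) h_shift
  rw [mul_div_cancel_left₀ _ two_ne_zero]
  exact (hu _ (Nat.le_add_right n k)).trans (le_div_two_pow_of_le_half hr n k)

lemma cauchySeq_of_le_half (hr : ∀ n, r (n + 1) ≤ r n / 2)
    (hu : ∀ n, dist (u n) (u (n + 1)) ≤ r n) : CauchySeq u := by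
  refine cauchySeq_of_le_geometric_two (C := 2 * r 0) fun n => (hu n).trans ?_
  simpa using le_div_two_pow_of_le_half hr 0 n

end Metric

lemma tendstoUniformly_of_dist_le {X Y : Type*} [PseudoMetricSpace Y] {f : ℕ → X → Y} {g : X → Y}
    {e : ℕ → ℝ} (he : Tendsto e atTop (𝓝 0)) (h : ∀ n x, dist (f n x) (g x) ≤ e n) :
    TendstoUniformly f g atTop :=
  Metric.tendstoUniformly_iff.2 fun _ hε => (he.eventually_lt_const hε).mono fun n hn x =>
    (dist_comm _ _).trans_lt ((h n x).trans_lt hn)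

lemma tendsto_iterate_of_tendstoUniformly {X : Type*} [UniformSpace X] {f : ℕ → X → X} {g : X → X}
    (h : TendstoUniformly f g atTop) (hg : Continuous g) (i : ℕ) (x : X) :
    Tendsto (fun n => (f n)^[i] x) atTop (𝓝 (g^[i] x)) := by
  induction i with
  | zero => exact tendsto_const_nhds
  | succ i ih =>
    simp only [Function.iterate_succ_apply']
    exact h.tendsto_comp hg.continuousAt ih

lemma exists_contDiff_tendstoUniformly {𝕜 E F : Type*} [RCLike 𝕜] [NormedAddCommGroup E]
    [NormedSpace 𝕜 E] [NormedAddCommGroup F] [NormedSpace 𝕜 F] [CompleteSpace F]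
    {f : ℕ → E → F} (hf : ∀ n, ContDiff 𝕜 ∞ (f n)) {e : ℕ → ℝ} (he : Summable e)
    (h : ∀ n, ∀ j ≤ n, ∀ z, ‖iteratedFDeriv 𝕜 j (fun z => f (n + 1) z - f n z) z‖ ≤ e n) :
    ∃ g, ContDiff 𝕜 ∞ g ∧ TendstoUniformly f g atTop := by
  have h_norm (n : ℕ) (z : E) : ‖f (n + 1) z - f n z‖ ≤ e n := by
    simpa only [norm_iteratedFDeriv_zero] using h n 0 n.zero_le z
  have h_smooth : ContDiff 𝕜 ∞ fun z => ∑' n, (f (n + 1) z - f n z) := by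
    refine contDiff_tsum_of_eventually (v := fun _ => e) (fun n => (hf (n + 1)).sub (hf n))
      (fun _ _ => he) fun j _ => ?_
    rw [Nat.cofinite_eq_atTop]
    exact (eventually_ge_atTop j).mono fun n hn => h n j hn
  refine ⟨fun z => f 0 z + ∑' n, (f (n + 1) z - f n z), (hf 0).add h_smooth, ?_⟩
  have h_sum := tendstoUniformly_tsum_nat he h_norm
  rw [Metric.tendstoUniformly_iff] at h_sum ⊢
  refine fun ε hε => (h_sum ε hε).mono fun n hn z => ?_
  have h_telescope : f n z = f 0 z + ∑ k ∈ Finset.range n, (f (k + 1) z - f k z) := by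
    rw [Finset.sum_range_sub fun k => f k z, add_sub_cancel]
  rw [h_telescope, dist_add_left]
  exact hn z

lemma measurePreserving_of_tendsto {X Y : Type*} [MeasurableSpace X] [PseudoMetricSpace Y]
    [MeasurableSpace Y] [BorelSpace Y] {μ : Measure X} [IsFiniteMeasure μ] {ν : Measure Y}
    {f : ℕ → X → Y} {g : X → Y} (hf : ∀ n, MeasurePreserving (f n) μ ν)
    (h : ∀ x, Tendsto (fun n => f n x) atTop (𝓝 (g x))) : MeasurePreserving g μ ν := by
  have hg : Measurable g := measurable_of_tendsto_metrizable (fun n => (hf n).measurable)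
    (tendsto_pi_nhds.2 h)
  have : IsFiniteMeasure ν := (hf 0).map_eq ▸ inferInstance
  refine ⟨hg, ext_of_forall_integral_eq_of_IsFiniteMeasure fun φ => ?_⟩
  have h_int {k : X → Y} (hk : Measurable k) : ∫ y, φ y ∂(μ.map k) = ∫ x, φ (k x) ∂μ :=
    integral_map hk.aemeasurable φ.continuous.measurable.aestronglyMeasurable
  have h_lim : Tendsto (fun n => ∫ x, φ (f n x) ∂μ) atTop (𝓝 (∫ x, φ (g x) ∂μ)) :=
    tendsto_integral_of_dominated_convergence (fun _ => ‖φ‖)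
      (fun n => (φ.continuous.measurable.comp (hf n).measurable).aestronglyMeasurable)
      (integrable_const _) (fun n => .of_forall fun x => φ.norm_coe_le_norm _)
      (.of_forall fun x => (φ.continuous.tendsto _).comp (h x))
  rw [h_int hg]
  refine tendsto_nhds_unique h_lim (tendsto_const_nhds.congr fun n => ?_)
  rw [← h_int (hf n).measurable, (hf n).map_eq]

lemma IsEquivariant.of_tendsto {f : ℕ → ℝ × ℝ → ℝ × ℝ} {g : ℝ × ℝ → ℝ × ℝ}
    (hf : ∀ n, IsEquivariant (f n)) (h : ∀ z, Tendsto (fun n => f n z) atTop (𝓝 (g z))) :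
    IsEquivariant g := fun z k =>
  tendsto_nhds_unique (h _) (((h z).add_const _).congr fun n => (hf n z k).symm)

lemma tendstoUniformly_descend {f : ℕ → ℝ × ℝ → ℝ × ℝ} {g : ℝ × ℝ → ℝ × ℝ}
    (hf : ∀ n, IsEquivariant (f n)) (hg : IsEquivariant g) (h : TendstoUniformly f g atTop) :
    TendstoUniformly (fun n => descend (f n)) (descend g) atTop := by
  rw [Metric.tendstoUniformly_iff] at h ⊢
  refine fun ε hε => (h ε hε).mono fun n hn p => ?_
  obtain ⟨z, rfl⟩ := surjective_torusProj p
  rw [← hg.isLiftOf_descend, ← (hf n).isLiftOf_descend]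
  exact (dist_torusProj_le _ _).trans_lt (hn z)

namespace TorusDiffeo

lemma isCkTorusDiffeo_map (h : TorusDiffeo) : IsCkTorusDiffeo ⊤ h.map := by
  have h_inv : Function.invFun h.map = h.symm.map := funext fun p => by
    rw [← h.map_map_symm p, Function.leftInverse_invFun
      (Function.LeftInverse.injective h.map_symm_map) _, h.map_map_symm]
  refine ⟨⟨Function.LeftInverse.injective h.map_symm_map,
    Function.RightInverse.surjective h.map_map_symm⟩, ⟨h, h.contDiff, h.isLiftOf_map⟩,
    ⟨h.symm, h.symm.contDiff, ?_⟩⟩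
  rw [h_inv]
  exact h.symm.isLiftOf_map

lemma exists_tendstoUniformly_map {f : ℕ → TorusDiffeo} {e : ℕ → ℝ} (he : Summable e)
    (h_forward : ∀ n, ∀ j ≤ n, ∀ z,
      ‖iteratedFDeriv ℝ j (fun z => f (n + 1) z - f n z) z‖ ≤ e n)
    (h_backward : ∀ n, ∀ j ≤ n, ∀ z,
      ‖iteratedFDeriv ℝ j (fun z => (f (n + 1)).symm z - (f n).symm z) z‖ ≤ e n) :
    ∃ g : TorusDiffeo, TendstoUniformly (fun n => (f n).map) g.map atTop := by
  obtain ⟨g, hg, h_lim⟩ := exists_contDiff_tendstoUniformly (fun n => (f n).contDiff) he h_forward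
  obtain ⟨g', hg', h_lim'⟩ :=
    exists_contDiff_tendstoUniformly (fun n => (f n).symm.contDiff) he h_backward
  have h_equiv : IsEquivariant g := .of_tendsto (fun n => (f n).isEquivariant) h_lim.tendsto_at
  have h_map := tendstoUniformly_descend (fun n => (f n).isEquivariant) h_equiv h_lim
  have h_left (z : ℝ × ℝ) : g' (g z) = z := tendsto_nhds_unique
    (h_lim'.tendsto_comp hg'.continuous.continuousAt (h_lim.tendsto_at z))
    (tendsto_const_nhds.congr fun n => ((f n).symm_apply_apply z).symm)
  have h_right (z : ℝ × ℝ) : g (g' z) = z := tendsto_nhds_unique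
    (h_lim.tendsto_comp hg.continuous.continuousAt (h_lim'.tendsto_at z))
    (tendsto_const_nhds.congr fun n => ((f n).apply_symm_apply z).symm)
  exact ⟨⟨⟨g, g', h_left, h_right⟩, hg, hg', h_equiv,
    measurePreserving_of_tendsto (fun n => (f n).measurePreserving_map) h_map.tendsto_at⟩, h_map⟩

end TorusDiffeo

/-! ### The limit rotation number -/

lemma irrational_of_tendsto_intCast_mul_sub {ι : Type*} {l : Filter ι} [l.NeBot] {x : ℝ}
    {q k : ι → ℤ} (h_ne : ∀ᶠ n in l, q n * x ≠ k n)
    (h : Tendsto (fun n => q n * x - k n) l (𝓝 0)) : Irrational x := by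
  rintro ⟨y, rfl⟩
  have h_den : (0 : ℝ) < y.den := mod_cast y.den_pos
  obtain ⟨n, hn, h_lt⟩ := (h_ne.and
    (Metric.tendsto_nhds.1 h (1 / y.den) (by positivity))).exists
  -- `y.den * (q n * y - k n)` is a nonzero integer of absolute value less than one
  have h_int : ((q n * y.num - k n * y.den : ℤ) : ℝ) = (q n * y - k n) * y.den := by
    have h_num : (y : ℝ) * y.den = y.num := mod_cast y.mul_den_eq_num
    push_cast
    rw [← h_num]
    ring
  have h_zero : q n * y.num - k n * y.den = 0 := by
    rw [← Int.abs_lt_one_iff, ← Int.cast_lt (R := ℝ), Int.cast_abs, h_int, abs_mul,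
      abs_of_pos h_den, Int.cast_one, ← lt_div_iff₀ h_den]
    rwa [Real.dist_0_eq_abs] at h_lt
  rw [h_zero, Int.cast_zero, eq_comm, mul_eq_zero_iff_right h_den.ne', sub_eq_zero] at h_int
  exact hn h_int

namespace Stage

/-- An infinite sequence of consecutive stages, whose tolerances are the powers of `1 / 2`. -/
def IsTower (L : ℕ → ℝ) (s : ℕ → Stage) : Prop :=
  ∀ n, IsStep L ((1 / 2) ^ n) n (s n) (s (n + 1))

namespace IsTower

variable {L : ℕ → ℝ} {s : ℕ → Stage}

lemma tendsto_time (h : IsTower L s) : Tendsto (fun n => (s n).time) atTop atTop :=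
  (strictMono_nat_of_lt_succ fun n => by
    linarith [(h n).two_mul_time_le, (s n).time_pos]).tendsto_atTop

lemma strictMono_horizon (h : IsTower L s) : StrictMono fun n => (s n).horizon :=
  strictMono_nat_of_lt_succ fun n => (h n).horizon_lt

lemma inv_time_le_half (h : IsTower L s) (n : ℕ) :
    1 / ((s (n + 1)).time : ℝ) ≤ 1 / (s n).time / 2 := by
  have h_pos : (0 : ℝ) < (s n).time := mod_cast (s n).time_pos
  have h_le : 2 * ((s n).time : ℝ) ≤ (s (n + 1)).time := mod_cast (h n).two_mul_time_le
  rw [div_div, mul_comm]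
  exact one_div_le_one_div_of_le (by positivity) h_le

lemma dist_rot_succ (h : IsTower L s) (n : ℕ) :
    dist (s n).rot (s (n + 1)).rot = 1 / (s (n + 1)).time := by
  rw [(h n).rot_eq, dist_self_add_right, Real.norm_of_nonneg (by positivity)]

lemma strictMono_rot (h : IsTower L s) : StrictMono fun n => (s n).rot :=
  strictMono_nat_of_lt_succ fun n => by
    have h_pos : (0 : ℝ) < (s (n + 1)).time := mod_cast (s (n + 1)).time_pos
    rw [(h n).rot_eq]
    exact lt_add_of_pos_right _ (one_div_pos.2 h_pos)

lemma abs_denom_mul_sub_rot_le (h : IsTower L s) {α : ℝ}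
    (hα : Tendsto (fun n => (s n).rot) atTop (𝓝 α)) (n : ℕ) :
    |(s n).denom * (α - (s n).rot)| ≤ 2 * (1 / 2) ^ n := by
  have h_pos : (0 : ℝ) < (s (n + 1)).time := mod_cast (s (n + 1)).time_pos
  have h_dist : dist (s n).rot α ≤ 2 * (1 / (s (n + 1)).time) :=
    dist_le_two_mul_of_tendsto (fun k => h.inv_time_le_half (k + 1))
      (fun k _ => (h.dist_rot_succ k).le) hα
  calc |(s n).denom * (α - (s n).rot)| = (s n).denom * dist (s n).rot α := by
        rw [abs_mul, Nat.abs_cast, dist_comm, Real.dist_eq]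
    _ ≤ (1 / 2) ^ n * (s (n + 1)).time * (2 * (1 / (s (n + 1)).time)) := by
        gcongr
        exact (h n).denom_le
    _ = 2 * (1 / 2) ^ n := by field_simp

lemma exists_irrational_tendsto_rot (h : IsTower L s) :
    ∃ α, Irrational α ∧ Tendsto (fun n => (s n).rot) atTop (𝓝 α) := by
  obtain ⟨α, hα⟩ := cauchySeq_tendsto_of_complete
    (cauchySeq_of_le_half (fun n => h.inv_time_le_half (n + 1)) fun n => (h.dist_rot_succ n).le)
  choose k hk using fun n => (s n).exists_denom_mul_rot
  refine ⟨α, irrational_of_tendsto_intCast_mul_sub (l := atTop)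
    (q := fun n => (s n).denom) (k := k) (.of_forall fun n => ?_) ?_, hα⟩
  · have h_lt : (s n).rot < α := (h.strictMono_rot n.lt_succ_self).trans_le
      (h.strictMono_rot.monotone.ge_of_tendsto hα (n + 1))
    rw [← hk, Int.cast_natCast]
    exact (mul_lt_mul_of_pos_left h_lt (mod_cast (s n).denom_pos)).ne'
  · refine squeeze_zero_norm (fun n => ?_) ?_ (a := fun n => 2 * (1 / 2) ^ n)
    · rw [← hk, Int.cast_natCast, ← mul_sub]
      exact h.abs_denom_mul_sub_rot_le hα n
    · simpa using (tendsto_pow_atTop_nhds_zero_of_lt_one one_half_pos.le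
        (one_half_lt_one (α := ℝ))).const_mul 2

end IsTower

end Stage

/-! ### Factor maps that are injective almost everywhere -/

lemma ergodic_of_semiconj_of_ae_leftInverse {X Y : Type*} [MeasurableSpace X] [MeasurableSpace Y]
    {μ : Measure X} {ν : Measure Y} {T : X → X} {g : Y → Y} {ψ : X → Y} {φ : Y → X}
    (hT : MeasurePreserving T μ μ) (hg : Ergodic g ν) (hψ : MeasurePreserving ψ μ ν)
    (hφ : Measurable φ) (h_semi : Function.Semiconj ψ T g) (h_inv : ∀ᵐ x ∂μ, φ (ψ x) = x) :
    Ergodic T μ := by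
  refine ⟨hT, ⟨fun S hS hTS => ?_⟩⟩
  have h_ae : ψ ⁻¹' (φ ⁻¹' S) =ᵐ[μ] S := by
    filter_upwards [h_inv] with x hx
    exact congrArg S hx
  have h_pull : ψ ⁻¹' (g ⁻¹' (φ ⁻¹' S)) =ᵐ[μ] ψ ⁻¹' (φ ⁻¹' S) := by
    rw [← preimage_comp, ← h_semi.comp_eq, preimage_comp]
    exact (hT.quasiMeasurePreserving.preimage_ae_eq h_ae).trans (hTS.eventuallyEq.trans h_ae.symm)
  have h_inv_set : g ⁻¹' (φ ⁻¹' S) =ᵐ[ν] φ ⁻¹' S := by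
    rw [← measure_symmDiff_eq_zero_iff, ← hψ.measure_preimage
      ((hg.measurable (hφ hS)).symmDiff (hφ hS)).nullMeasurableSet, preimage_symmDiff]
    exact measure_symmDiff_eq_zero_iff.2 h_pull
  have h_const := hg.quasiErgodic.aeconst_set₀ (hφ hS).nullMeasurableSet h_inv_set
  exact ((hψ.aeconst_preimage (hφ hS).nullMeasurableSet).2 h_const).congr h_ae

lemma exists_measurable_leftInvOn {X Y : Type*} [MeasurableSpace X] [StandardBorelSpace X]
    [Nonempty X] [MeasurableSpace Y] [MeasurableSpace.CountablySeparated Y] {ψ : X → Y} {A : Set X}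
    (hψ : Measurable ψ) (hA : MeasurableSet A) (h_inj : InjOn ψ A) :
    ∃ φ : Y → X, Measurable φ ∧ LeftInvOn φ ψ A := by
  have := hA.standardBorel
  have h_emb : MeasurableEmbedding (A.domRestrict ψ) :=
    (hψ.comp measurable_subtype_coe).measurableEmbedding h_inj.injective
  obtain ⟨φ, hφ, h_eq⟩ :=
    h_emb.exists_measurable_extend measurable_subtype_coe fun _ => inferInstance
  exact ⟨φ, hφ, fun x hx => congrFun h_eq ⟨x, hx⟩⟩

lemma exists_measurableSet_mapsTo_of_ae {X : Type*} [MeasurableSpace X] {μ : Measure X} {T : X → X}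
    (hT : MeasurePreserving T μ μ) {P : X → Prop} (hP : ∀ᵐ x ∂μ, P x) :
    ∃ A, MeasurableSet A ∧ μ Aᶜ = 0 ∧ MapsTo T A A ∧ ∀ x ∈ A, P x := by
  obtain ⟨B, hB, hB_meas, hB_null⟩ := exists_measurable_superset_of_null hP
  refine ⟨⋂ n, T^[n] ⁻¹' Bᶜ, .iInter fun n => (hT.iterate n).measurable hB_meas.compl, ?_,
    fun x hx => mem_iInter.2 fun n => ?_, fun x hx => not_not.1 fun h => ?_⟩
  · rw [compl_iInter, measure_iUnion_null_iff]
    intro n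
    rwa [← preimage_compl, compl_compl, (hT.iterate n).measure_preimage hB_meas.nullMeasurableSet]
  · exact mem_iInter.1 hx (n + 1)
  · exact mem_iInter.1 hx 0 (hB h)

lemma ergodic_add_coe_of_irrational {α : ℝ} (hα : Irrational α) :
    Ergodic (fun x : Torus1 => x + α) volume := by
  rw [AddCircle.ergodic_add_right, addOrderOf_eq_zero_iff,
    AddCircle.not_isOfFinAddOrder_iff_forall_rat_ne_div]
  exact fun q hq => hα ⟨q, by rwa [div_one] at hq⟩

lemma ergodic_and_isoToIrrationalRotation {T : Torus2 → Torus2} {ψ : Torus2 → Torus1} {α : ℝ}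
    (hT : MeasurePreserving T volume volume) (hα : Irrational α)
    (hψ : MeasurePreserving ψ volume volume) (h_semi : Function.Semiconj ψ T (· + (α : Torus1)))
    {c : ℕ → Torus1 → Torus2} (hc : ∀ᵐ p, Tendsto (fun n => c n (ψ p)) atTop (𝓝 p)) :
    Ergodic T volume ∧ IsoToIrrationalRotation T := by
  obtain ⟨A, hA, hA_null, hA_maps, h_lim⟩ := exists_measurableSet_mapsTo_of_ae hT hc
  have h_inj : InjOn ψ A := fun p hp p' hp' h_eq =>
    tendsto_nhds_unique (h_lim p hp) (h_eq ▸ h_lim p' hp')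
  obtain ⟨φ, hφ, h_left⟩ := exists_measurable_leftInvOn hψ.measurable hA h_inj
  have h_image : MeasurableSet (ψ '' A) := hA.image_of_measurable_injOn hψ.measurable h_inj
  have h_image_null : volume (ψ '' A)ᶜ = 0 := by
    rw [← hψ.measure_preimage h_image.compl.nullMeasurableSet]
    exact measure_mono_null (fun p hp hpA => hp (mem_image_of_mem ψ hpA)) hA_null
  refine ⟨ergodic_of_semiconj_of_ae_leftInverse hT (ergodic_add_coe_of_irrational hα) hψ hφ h_semi
    (measure_mono_null (compl_subset_compl.2 h_left) hA_null),
    α, hα, A, ψ '' A, ψ, φ, hA, h_image, hA_null, h_image_null, hA_maps, ?_, hψ.measurable, hφ,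
    mapsTo_image ψ A, ?_, h_left, ?_, hψ.map_eq, fun p _ => h_semi p⟩
  · rintro _ ⟨p, hp, rfl⟩
    exact ⟨T p, hA_maps hp, h_semi p⟩
  · rintro _ ⟨p, hp, rfl⟩
    rwa [h_left hp]
  · rintro _ ⟨p, hp, rfl⟩
    rw [h_left hp]

namespace Stage.IsTower

variable {L : ℕ → ℝ} {s : ℕ → Stage} {ψ : Torus2 → Torus1}

lemma dist_angle_succ_le (h : IsTower L s) (n : ℕ) (p : Torus2) :
    dist ((s n).conj.angle p) ((s (n + 1)).conj.angle p) ≤ (s n).radius :=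
  (dist_comm _ _).trans_le ((h n).dist_angle_le p)

lemma exists_tendsto_angle (h : IsTower L s) :
    ∃ ψ : Torus2 → Torus1, ∀ p, Tendsto (fun n => (s n).conj.angle p) atTop (𝓝 (ψ p)) := by
  choose ψ hψ using fun p => cauchySeq_tendsto_of_complete
    (cauchySeq_of_le_half (fun n => (h n).radius_le) fun n => h.dist_angle_succ_le n p)
  exact ⟨ψ, hψ⟩

lemma dist_angle_le_of_tendsto (h : IsTower L s) {p : Torus2} {x : Torus1}
    (hx : Tendsto (fun n => (s n).conj.angle p) atTop (𝓝 x)) (n : ℕ) :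
    dist ((s n).conj.angle p) x ≤ 2 * (s n).radius :=
  dist_le_two_mul_of_tendsto (fun k => (h k).radius_le) (fun k _ => h.dist_angle_succ_le k p) hx

lemma semiconj_of_tendsto_angle (h : IsTower L s)
    (hψ : ∀ p, Tendsto (fun n => (s n).conj.angle p) atTop (𝓝 (ψ p))) {T : Torus2 → Torus2}
    (hT : ∀ p, Tendsto (fun n => (s n).approx.map p) atTop (𝓝 (T p))) {α : ℝ}
    (hα : Tendsto (fun n => (s n).rot) atTop (𝓝 α)) :
    Function.Semiconj ψ T (· + (α : Torus1)) := fun p => by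
  have h_radius : Tendsto (fun n => 2 * (s n).radius) atTop (𝓝 0) := by
    simpa using (tendsto_zero_of_le_half (fun n => (s n).radius_pos.le)
      fun n => (h n).radius_le).const_mul 2
  have h_unif : TendstoUniformly (fun n => (s n).conj.angle) ψ atTop :=
    tendstoUniformly_of_dist_le h_radius fun n p => h.dist_angle_le_of_tendsto (hψ p) n
  have h_cont : Continuous ψ := h_unif.continuous (.of_forall fun n => (s n).conj.continuous_angle)
  have h_coe : Tendsto (fun n => ((s n).rot : Torus1)) atTop (𝓝 (α : Torus1)) :=
    ((AddCircle.continuous_mk' 1).tendsto α).comp hα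
  refine tendsto_nhds_unique (h_unif.tendsto_comp h_cont.continuousAt (hT p)) ?_
  exact ((hψ p).add h_coe).congr fun n => ((s n).conj.angle_map_flow (s n).rot p).symm

lemma exists_ae_tendsto_section (h : IsTower L s)
    (hψ : ∀ p, Tendsto (fun n => (s n).conj.angle p) atTop (𝓝 (ψ p))) :
    ∃ c : ℕ → Torus1 → Torus2, ∀ᵐ p, Tendsto (fun n => c n (ψ p)) atTop (𝓝 p) := by
  choose c h_vol h_mod using fun n => (h n).exists_section
  refine ⟨c, ?_⟩
  have h_sum : ∑' n, volume {p | (1 / 2) ^ n < dist p (c n ((s (n + 1)).conj.angle p))} ≠ ⊤ :=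
    ne_top_of_le_ne_top summable_geometric_two.tsum_ofReal_ne_top (ENNReal.tsum_le_tsum h_vol)
  have h_lim : Tendsto (fun n : ℕ => (1 / 2 : ℝ) ^ n + (1 / 2) ^ n) atTop (𝓝 0) := by
    simpa using summable_geometric_two.tendsto_atTop_zero.add
      summable_geometric_two.tendsto_atTop_zero
  filter_upwards [ae_eventually_notMem h_sum] with p hp
  refine tendsto_iff_dist_tendsto_zero.2
    (squeeze_zero' (.of_forall fun _ => dist_nonneg) (hp.mono fun n hn => ?_) h_lim)
  have h_angle : dist (ψ p) ((s (n + 1)).conj.angle p) ≤ 2 * (s (n + 1)).radius :=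
    (dist_comm _ _).trans_le (h.dist_angle_le_of_tendsto (hψ p) (n + 1))
  exact (dist_triangle _ (c n ((s (n + 1)).conj.angle p)) _).trans
    (add_le_add (h_mod n _ _ h_angle) ((dist_comm _ _).trans_le (not_lt.1 hn)))

end Stage.IsTower

/-! ### Slow entropy of the limit -/

namespace Stage.IsTower

variable {L : ℕ → ℝ} {s : ℕ → Stage} {T : Torus2 → Torus2}

lemma exists_tendstoUniformly_approx (h : IsTower L s) :
    ∃ g : TorusDiffeo, TendstoUniformly (fun n => (s n).approx.map) g.map atTop :=
  TorusDiffeo.exists_tendstoUniformly_map summable_geometric_two (fun n => (h n).forward)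
    fun n => (h n).backward

lemma dist_iterate_le_of_tendstoUniformly (h : IsTower L s)
    (hT : TendstoUniformly (fun n => (s n).approx.map) T atTop) {n i : ℕ}
    (hi : i ≤ (s (n + 1)).horizon) (p : Torus2) :
    dist (T^[i] p) ((s n).approx.map^[i] p) ≤ 2 * (1 / 2) ^ n := by
  have h_cont : Continuous T := hT.continuous (.of_forall fun n => (s n).approx.continuous_map)
  rw [dist_comm]
  refine dist_le_two_mul_of_tendsto (r := fun n => (1 / 2) ^ n) (fun k => ?_) (fun k hk => ?_)
    (tendsto_iterate_of_tendstoUniformly hT h_cont i p)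
  · exact (by ring : (1 / 2 : ℝ) ^ (k + 1) = (1 / 2) ^ k / 2).le
  · rw [dist_comm]
    have h_horizon : i ≤ (s (k + 1)).horizon :=
      hi.trans (h.strictMono_horizon.monotone (Nat.succ_le_succ hk))
    exact (h k).dist_iterate_le i h_horizon p

lemma eventually_bowenCoverNum_le (h : IsTower L s) (hL : ∀ᶠ m in atTop, 0 ≤ L m)
    (hT : TendstoUniformly (fun n => (s n).approx.map) T atTop) {ε t : ℝ} (hε : 0 < ε)
    (ht : 1 < t) : ∀ᶠ m in atTop, (bowenCoverNum T m ε : ℝ) ≤ Real.exp (t * L m) := by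
  have h_horizon : Tendsto (fun n => (s (n + 1)).horizon) atTop atTop :=
    (tendsto_add_atTop_iff_nat 1).2 h.strictMono_horizon.tendsto_atTop
  suffices h_nonneg : ∀ᶠ m in atTop, 0 ≤ L m → (bowenCoverNum T m ε : ℝ) ≤ Real.exp (t * L m) by
    filter_upwards [hL, h_nonneg] with m hm h_imp using h_imp hm
  refine eventually_atTop_of_forall_Icc h_horizon ?_
  have h_pow : Tendsto (fun n : ℕ => (1 / 2 : ℝ) ^ n) atTop (𝓝 0) :=
    summable_geometric_two.tendsto_atTop_zero
  filter_upwards [h_pow.eventually_lt_const (by positivity : 0 < ε / 3),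
    h_pow.eventually_lt_const (sub_pos.2 ht)] with n hn_ε hn_t m hm hm' hLm
  obtain ⟨Z, hZ, h_card⟩ := (h n).exists_cover
  have h_cover : bowenCoverNum T m ε ≤ Z.card := by
    refine bowenCoverNum_le_card_of_dist_iterate_le hε (η := 2 * (1 / 2) ^ (n + 1))
      (fun i hi p => h.dist_iterate_le_of_tendstoUniformly hT (hi.le.trans hm') p) fun p => ?_
    obtain ⟨z, hz, h_near⟩ := hZ p
    refine ⟨z, hz, fun i _ => ?_⟩
    rw [pow_succ]
    linarith [h_near i]
  calc (bowenCoverNum T m ε : ℝ) ≤ Z.card := mod_cast h_cover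
    _ ≤ Real.exp ((1 + (1 / 2) ^ n) * L m) := h_card m hm
    _ ≤ Real.exp (t * L m) := by gcongr; linarith

lemma frequently_le_bowenCoverNum (h : IsTower L s) (hL : ∀ᶠ m in atTop, 0 ≤ L m)
    (hT : TendstoUniformly (fun n => (s n).approx.map) T atTop) {ε t : ℝ} (hε : 0 < ε)
    (hε' : ε < 3 / 32) (ht : t < 1) :
    ∃ᶠ m in atTop, Real.exp (t * L m) ≤ bowenCoverNum T m ε := by
  have h_time : Tendsto (fun n => (s (n + 1)).time) atTop atTop :=
    (tendsto_add_atTop_iff_nat 1).2 h.tendsto_time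
  have h_cont : Continuous T := hT.continuous (.of_forall fun n => (s n).approx.continuous_map)
  have h_pow : Tendsto (fun n : ℕ => (1 / 2 : ℝ) ^ n) atTop (𝓝 0) :=
    summable_geometric_two.tendsto_atTop_zero
  refine h_time.frequently (Eventually.frequently ?_)
  filter_upwards [h_time.eventually hL, h_pow.eventually_lt_const (sub_pos.2 ht),
    h_pow.eventually_lt_const (sub_pos.2 hε')] with n hLn hn_t hn_ε
  obtain ⟨N, f, h_le, h_sep⟩ := (h n).exists_separated
  have h_card : N ≤ bowenCoverNum T (s (n + 1)).time ε := by
    rw [← Fintype.card_fin N]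
    refine card_le_bowenCoverNum_of_dist_iterate_le h_cont hε (f := f)
      (η := 2 * (1 / 2) ^ (n + 1))
      (fun i hi p => h.dist_iterate_le_of_tendstoUniformly hT
        (hi.le.trans (h (n + 1)).time_le_horizon) p) fun j k hjk => ?_
    obtain ⟨i, hi, h_far⟩ := h_sep hjk
    refine ⟨i, hi, h_far.trans' ?_⟩
    rw [pow_succ]
    linarith
  calc Real.exp (t * L (s (n + 1)).time) ≤ Real.exp ((1 - (1 / 2) ^ n) * L (s (n + 1)).time) := by
        gcongr
        linarith
    _ ≤ N := h_le
    _ ≤ bowenCoverNum T (s (n + 1)).time ε := mod_cast h_card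

lemma hasUpperTopSlowEntropy (h : IsTower L s) (hL : Tendsto L atTop atTop)
    (hT : TendstoUniformly (fun n => (s n).approx.map) T atTop) :
    HasUpperTopSlowEntropy T (fun m t => Real.exp (t * L m)) 1 := by
  have h_nonneg : ∀ᶠ m in atTop, 0 ≤ L m := hL.eventually_ge_atTop 0
  refine hasUpperTopSlowEntropy_exp hL one_pos
    (fun ε hε t ht => h.eventually_bowenCoverNum_le h_nonneg hT hε ht) ?_
  filter_upwards [Ioo_mem_nhdsGT (by norm_num : (0 : ℝ) < 3 / 32)] with ε hε t _ ht
  exact h.frequently_le_bowenCoverNum h_nonneg hT hε.1 hε.2 ht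

end Stage.IsTower

theorem stmt4_general {L : ℕ → ℝ} (hL : IsSlowGrowth L) :
    ∃ T : Torus2 → Torus2,
      IsCkTorusDiffeo ⊤ T ∧
      MeasurePreserving T volume volume ∧
      Ergodic T volume ∧
      IsoToIrrationalRotation T ∧
      HasUpperTopSlowEntropy T (fun m t => Real.exp (t * L m)) 1 := by
  obtain ⟨s, hs⟩ := Stage.exists_forall_isStep hL fun n => pow_pos one_half_pos n
  have h_tower : Stage.IsTower L s := hs
  obtain ⟨g, hg⟩ := h_tower.exists_tendstoUniformly_approx
  obtain ⟨α, hα_irr, hα⟩ := h_tower.exists_irrational_tendsto_rot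
  obtain ⟨ψ, hψ⟩ := h_tower.exists_tendsto_angle
  obtain ⟨c, hc⟩ := h_tower.exists_ae_tendsto_section hψ
  obtain ⟨h_ergodic, h_iso⟩ := ergodic_and_isoToIrrationalRotation g.measurePreserving_map hα_irr
    (measurePreserving_of_tendsto (fun n => (s n).conj.measurePreserving_angle) hψ)
    (h_tower.semiconj_of_tendsto_angle hψ hg.tendsto_at hα) hc
  exact ⟨g.map, g.isCkTorusDiffeo_map, g.measurePreserving_map, h_ergodic, h_iso,
    h_tower.hasUpperTopSlowEntropy hL.tendsto_atTop hg⟩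

end

/-- There exist `q₁ ≥ 2` and an ergodic `C^∞` volume-preserving
diffeomorphism `T` of `𝕋²`, measure-theoretically isomorphic to an irrational circle
rotation, whose upper topological slow entropy w.r.t. `a^{int1,4}` (base `q₁`) equals `1`. -/
theorem stmt4 :
    ∃ q₁ : ℕ, 2 ≤ q₁ ∧ ∃ T : Torus2 → Torus2,
      IsCkTorusDiffeo ⊤ T ∧
      MeasurePreserving T (volume : Measure Torus2) volume ∧
      Ergodic T (volume : Measure Torus2) ∧
      IsoToIrrationalRotation T ∧
      HasUpperTopSlowEntropy T (intScale1 4 q₁) 1 := by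
  obtain ⟨T, hT, h_mp, h_erg, h_iso, h_ent⟩ :=
    stmt4_general (isSlowGrowth_intGrowth (r := 4) (q := 2) four_ne_zero le_rfl)
  exact ⟨2, le_rfl, T, hT, h_mp, h_erg, h_iso, h_ent.congr <| (eventually_ne_atTop 0).mono
    fun m hm => funext fun t => (intScale1_eq_exp hm t).symm⟩
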